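/- arXiv:2109.03788 — 10 statements merged into one kernel-verified Lean document; each statement's English description precedes it below -/
import Mathlib

section
/- Let X be a countably infinite set, let P satisfy assumption (A) with constant C_*, and let V satisfy inf V > 0 and assumption (B). Fix a finite B₀ ⊆ X with sup{ 1/V(x) : x ∉ B₀ } < min(1, 1/C_*), and let C₂ be the constant from the upper bound for subharmonic functions. Then for every finite set B ⊆ X with B ⊇ B₀, every D ⊆ X, and every non-negative, non-zero, bounded function f which is (𝒰−I)-harmonic in D ∩ B^c and vanishes on D^c ∩ B^c, one has K̲_B ≤ f(x) / ( (P(x,x₀)/V(x)) ∑_{y∈B} f(y) ) ≤ C₂ K̄_B for all x ∈ D ∩ B^c and x₀ ∈ B. -/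
/-- (Two-sided estimate for harmonic functions, Corollary 2.5 of the paper.)
Under assumptions (A) and (B), with a finite `B₀` such that `sup {1/V x : x ∉ B₀} < min 1 (1/Cstar)`
and `C₂` the constant from the upper bound for subharmonic functions: for every finite `B ⊇ B₀`,
every `D ⊆ X`, and every non-negative, non-zero, bounded `f` which is `(𝒰 - I)`-harmonic in
`D ∩ Bᶜ` and vanishes on `Dᶜ ∩ Bᶜ`, one has
`K̲_B ≤ f x / ((P x x₀ / V x) ∑_{y ∈ B} f y) ≤ C₂ K̄_B` for `x ∈ D ∩ Bᶜ`, `x₀ ∈ B`. -/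
theorem stmt3 {X : Type*} [Countable X] [Infinite X]
    (P : X → X → ℝ)
    (hP_nonneg : ∀ x y, 0 ≤ P x y)
    (hP_sum : ∀ x : X, Summable (P x))
    (hP_sub : ∀ x : X, ∑' y, P x y ≤ 1)
    (hP_pos : ∀ x y, 0 < P x y)
    (Cstar : ℝ) (hCstar : 0 < Cstar)
    (hDSP : ∀ x y, ∑' z, P x z * P z y ≤ Cstar * P x y)
    (V : X → ℝ) (hV_pos : ∃ v > 0, ∀ x, v ≤ V x)
    (hV_conf : ∀ M > 0, ∃ BM : Finset X, ∀ x ∉ BM, M ≤ V x)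
    (B₀ : Finset X) (C₁ : ℝ)
    (hC₁lt : C₁ < min 1 (1 / Cstar))
    (hB₀ : ∀ x ∉ B₀, 1 / V x ≤ C₁)
    -- `C₂` is the constant from the upper bound for subharmonic functions:
    (C₂ : ℝ) (hC₂pos : 0 < C₂)
    (hC₂ : ∀ B : Finset X, B₀ ⊆ B →
      ∀ f : X → ℝ, (∀ x, 0 ≤ f x) → (∃ M : ℝ, ∀ x, f x ≤ M) →
        (∀ x ∉ B, f x ≤ (1 / V x) * ∑' y, P x y * f y) →
        ∀ x ∉ B, f x ≤ C₂ * ((1 / V x) * ∑ y ∈ B, P x y * f y)) :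
    ∀ B : Finset X, B₀ ⊆ B → ∀ D : Set X,
      ∀ f : X → ℝ, (∀ x, 0 ≤ f x) → (∃ x, f x ≠ 0) → (∃ M : ℝ, ∀ x, f x ≤ M) →
        (∀ x, x ∈ D → x ∉ B → (1 / V x) * ∑' y, P x y * f y = f x) →
        (∀ x, x ∉ D → x ∉ B → f x = 0) →
        ∀ x, x ∈ D → x ∉ B → ∀ x₀ ∈ B,
          sInf {r : ℝ | ∃ x' : X, ∃ y ∈ B, ∃ z ∈ B, r = P x' y / P x' z} ≤
              f x / ((P x x₀ / V x) * ∑ y ∈ B, f y) ∧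
            f x / ((P x x₀ / V x) * ∑ y ∈ B, f y) ≤
              C₂ * sSup {r : ℝ | ∃ x' : X, ∃ y ∈ B, ∃ z ∈ B, r = P x' y / P x' z} := by
  intro B hB D f hf0 hfne hfM hharm hvan x hxD hxB x₀ hx₀
  obtain ⟨v, hv, hvV⟩ := hV_pos
  have hV : ∀ x, 0 < V x := fun x => hv.trans_le (hvV x)
  obtain ⟨M, hM⟩ := hfM
  have hP1 : ∀ x y, P x y ≤ 1 := fun x y =>
    ((hP_sum x).le_tsum y (fun z _ => hP_nonneg x z)).trans (hP_sub x)
  have hsumPf : ∀ x, Summable (fun y => P x y * f y) := fun x =>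
    Summable.of_nonneg_of_le (fun y => mul_nonneg (hP_nonneg x y) (hf0 y))
      (fun y => mul_le_mul_of_nonneg_left (hM y) (hP_nonneg x y)) ((hP_sum x).mul_right M)
  have hsumPP : ∀ x y, Summable (fun z => P x z * P z y) := fun x y =>
    Summable.of_nonneg_of_le (fun z => mul_nonneg (hP_nonneg x z) (hP_nonneg z y))
      (fun z => mul_le_of_le_one_right (hP_nonneg x z) (hP1 z y)) (hP_sum x)
  have hsub : ∀ x ∉ B, f x ≤ (1 / V x) * ∑' y, P x y * f y := by
    intro x hx
    by_cases hD : x ∈ D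
    · exact (hharm x hD hx).ge
    · rw [hvan x hD hx]
      exact mul_nonneg (one_div_nonneg.2 (hV x).le)
        (tsum_nonneg fun y => mul_nonneg (hP_nonneg x y) (hf0 y))
  have hup := hC₂ B hB f hf0 ⟨M, hM⟩ hsub
  have hS : 0 < ∑ y ∈ B, f y := by
    rcases (Finset.sum_nonneg fun y (_ : y ∈ B) => hf0 y).lt_or_eq with h | h
    · exact h
    · exfalso
      have h0 := (Finset.sum_eq_zero_iff_of_nonneg fun y (_ : y ∈ B) => hf0 y).1 h.symm
      obtain ⟨w, hw⟩ := hfne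
      by_cases hwB : w ∈ B
      · exact hw (h0 w hwB)
      · have h1 := hup w hwB
        rw [Finset.sum_eq_zero (fun y hy => by rw [h0 y hy, mul_zero])] at h1
        simp only [mul_zero] at h1
        exact hw (le_antisymm h1 (hf0 w))
  set A := {r : ℝ | ∃ x' : X, ∃ y ∈ B, ∃ z ∈ B, r = P x' y / P x' z} with hA
  have hbelow : BddBelow A := by
    refine ⟨0, ?_⟩
    rintro r ⟨x', y, _, z, _, rfl⟩
    exact div_nonneg (hP_nonneg _ _) (hP_nonneg _ _)
  have habove : BddAbove A := by
    refine ⟨∑ y ∈ B, ∑ z ∈ B, Cstar / P y z, ?_⟩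
    rintro r ⟨x', y, hy, z, hz, rfl⟩
    have hnn : ∀ y z, 0 ≤ Cstar / P y z := fun y z => div_nonneg hCstar.le (hP_nonneg _ _)
    have h1 : P x' y / P x' z ≤ Cstar / P y z := by
      rw [div_le_div_iff₀ (hP_pos _ _) (hP_pos _ _)]
      exact ((hsumPP x' z).le_tsum y
        (fun w _ => mul_nonneg (hP_nonneg _ _) (hP_nonneg _ _))).trans (hDSP x' z)
    have h2 : Cstar / P y z ≤ ∑ z ∈ B, Cstar / P y z :=
      Finset.single_le_sum (f := fun z => Cstar / P y z) (fun z _ => hnn y z) hz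
    have h3 : ∑ z ∈ B, Cstar / P y z ≤ ∑ y ∈ B, ∑ z ∈ B, Cstar / P y z :=
      Finset.single_le_sum (f := fun y => ∑ z ∈ B, Cstar / P y z)
        (fun y _ => Finset.sum_nonneg fun z _ => hnn y z) hy
    exact h1.trans (h2.trans h3)
  have hlow : ∀ y ∈ B, sInf A * P x x₀ ≤ P x y := fun y hy =>
    (le_div_iff₀ (hP_pos x x₀)).1 (csInf_le hbelow ⟨x, y, hy, x₀, hx₀, rfl⟩)
  have hhigh : ∀ y ∈ B, P x y ≤ sSup A * P x x₀ := fun y hy =>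
    (div_le_iff₀ (hP_pos x x₀)).1 (le_csSup habove ⟨x, y, hy, x₀, hx₀, rfl⟩)
  have hVi : 0 ≤ 1 / V x := one_div_nonneg.2 (hV x).le
  have hden : 0 < (P x x₀ / V x) * ∑ y ∈ B, f y := mul_pos (div_pos (hP_pos _ _) (hV x)) hS
  constructor
  · rw [le_div_iff₀ hden]
    calc sInf A * ((P x x₀ / V x) * ∑ y ∈ B, f y)
        = (1 / V x) * ((sInf A * P x x₀) * ∑ y ∈ B, f y) := by ring
      _ ≤ (1 / V x) * ∑ y ∈ B, P x y * f y := by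
          refine mul_le_mul_of_nonneg_left ?_ hVi
          rw [Finset.mul_sum]
          exact Finset.sum_le_sum fun y hy => mul_le_mul_of_nonneg_right (hlow y hy) (hf0 y)
      _ ≤ (1 / V x) * ∑' y, P x y * f y :=
          mul_le_mul_of_nonneg_left ((hsumPf x).sum_le_tsum B
            (fun y _ => mul_nonneg (hP_nonneg x y) (hf0 y))) hVi
      _ = f x := hharm x hxD hxB
  · rw [div_le_iff₀ hden]
    calc f x ≤ C₂ * ((1 / V x) * ∑ y ∈ B, P x y * f y) := hup x hxB
      _ ≤ C₂ * ((1 / V x) * ((sSup A * P x x₀) * ∑ y ∈ B, f y)) := by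
          refine mul_le_mul_of_nonneg_left (mul_le_mul_of_nonneg_left ?_ hVi) hC₂pos.le
          rw [Finset.mul_sum]
          exact Finset.sum_le_sum fun y hy => mul_le_mul_of_nonneg_right (hhigh y hy) (hf0 y)
      _ = C₂ * sSup A * ((P x x₀ / V x) * ∑ y ∈ B, f y) := by ring
end

section
/- (Uniform Boundary Harnack Inequality at infinity.) In the setting of assumptions (A) and (B), with B₀ a finite set satisfying sup{1/V(x) : x ∉ B₀} < min(1, 1/C_*) and C₂ the upper-bound constant: for every finite B ⊇ B₀ and every D ⊆ X, if f and g are two non-negative, non-zero, bounded functions which are (𝒰−I)-harmonic in D ∩ B^c and vanish on D^c ∩ B^c, then (K̲_B/(C₂ K̄_B))² ≤ f(x)g(y)/(g(x)f(y)) ≤ (C₂ K̄_B/K̲_B)² for all x, y ∈ D ∩ B^c. -/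
theorem bhi_arith (k c p q F G a b d e : ℝ) (hk : 0 < k) (hc : 0 < c) (hp : 0 < p) (hq : 0 < q)
    (hF : 0 < F) (hG : 0 < G)
    (a1 : k * (p * F) ≤ a) (a2 : a ≤ c * (p * F))
    (b1 : k * (q * G) ≤ b) (b2 : b ≤ c * (q * G))
    (d1 : k * (p * G) ≤ d) (d2 : d ≤ c * (p * G))
    (e1 : k * (q * F) ≤ e) (e2 : e ≤ c * (q * F)) :
    (k / c) ^ 2 ≤ a * b / (d * e) ∧ a * b / (d * e) ≤ (c / k) ^ 2 := by
  have ha : 0 < a := lt_of_lt_of_le (by positivity) a1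
  have hb : 0 < b := lt_of_lt_of_le (by positivity) b1
  have hd : 0 < d := lt_of_lt_of_le (by positivity) d1
  have he : 0 < e := lt_of_lt_of_le (by positivity) e1
  have h1 : k * (p * F) * (k * (q * G)) ≤ a * b := mul_le_mul a1 b1 (by positivity) ha.le
  have h2 : a * b ≤ c * (p * F) * (c * (q * G)) := mul_le_mul a2 b2 hb.le (by positivity)
  have h3 : k * (p * G) * (k * (q * F)) ≤ d * e := mul_le_mul d1 e1 (by positivity) hd.le
  have h4 : d * e ≤ c * (p * G) * (c * (q * F)) := mul_le_mul d2 e2 he.le (by positivity)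
  rw [div_pow, div_pow]
  constructor
  · rw [div_le_div_iff₀ (by positivity) (by positivity)]
    have := mul_le_mul_of_nonneg_left h4 (sq_nonneg k)
    have := mul_le_mul_of_nonneg_left h1 (sq_nonneg c)
    linarith
  · rw [div_le_div_iff₀ (by positivity) (by positivity)]
    have := mul_le_mul_of_nonneg_left h2 (sq_nonneg k)
    have := mul_le_mul_of_nonneg_left h3 (sq_nonneg c)
    linarith

/-- (Uniform Boundary Harnack Inequality at infinity, Corollary 2.5 of the
paper.) Under assumptions (A) and (B), with `B₀` a finite set satisfying
`sup {1/V x : x ∉ B₀} < min 1 (1/Cstar)` and `C₂` the upper-bound constant: for every finite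
`B ⊇ B₀` and every `D ⊆ X`, if `f` and `g` are two non-negative, non-zero, bounded functions
which are `(𝒰 - I)`-harmonic in `D ∩ Bᶜ` and vanish on `Dᶜ ∩ Bᶜ`, then
`(K̲_B / (C₂ K̄_B))² ≤ f x * g y / (g x * f y) ≤ (C₂ K̄_B / K̲_B)²` for all `x, y ∈ D ∩ Bᶜ`. -/
theorem stmt4 {X : Type*} [Countable X] [Infinite X]
    (P : X → X → ℝ)
    (hP_nonneg : ∀ x y, 0 ≤ P x y)
    (hP_sum : ∀ x : X, Summable (P x))
    (hP_sub : ∀ x : X, ∑' y, P x y ≤ 1)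
    (hP_pos : ∀ x y, 0 < P x y)
    (Cstar : ℝ) (hCstar : 0 < Cstar)
    (hDSP : ∀ x y, ∑' z, P x z * P z y ≤ Cstar * P x y)
    (V : X → ℝ) (hV_pos : ∃ v > 0, ∀ x, v ≤ V x)
    (hV_conf : ∀ M > 0, ∃ BM : Finset X, ∀ x ∉ BM, M ≤ V x)
    (B₀ : Finset X) (C₁ : ℝ)
    (hC₁lt : C₁ < min 1 (1 / Cstar))
    (hB₀ : ∀ x ∉ B₀, 1 / V x ≤ C₁)
    -- `C₂` is the constant from the upper bound for subharmonic functions: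
    (C₂ : ℝ) (hC₂pos : 0 < C₂)
    (hC₂ : ∀ B : Finset X, B₀ ⊆ B →
      ∀ f : X → ℝ, (∀ x, 0 ≤ f x) → (∃ M : ℝ, ∀ x, f x ≤ M) →
        (∀ x ∉ B, f x ≤ (1 / V x) * ∑' y, P x y * f y) →
        ∀ x ∉ B, f x ≤ C₂ * ((1 / V x) * ∑ y ∈ B, P x y * f y)) :
    ∀ B : Finset X, B₀ ⊆ B → ∀ D : Set X,
      ∀ f g : X → ℝ,
        (∀ x, 0 ≤ f x) → (∃ x, f x ≠ 0) → (∃ M : ℝ, ∀ x, f x ≤ M) →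
        (∀ x, x ∈ D → x ∉ B → (1 / V x) * ∑' y, P x y * f y = f x) →
        (∀ x, x ∉ D → x ∉ B → f x = 0) →
        (∀ x, 0 ≤ g x) → (∃ x, g x ≠ 0) → (∃ M : ℝ, ∀ x, g x ≤ M) →
        (∀ x, x ∈ D → x ∉ B → (1 / V x) * ∑' y, P x y * g y = g x) →
        (∀ x, x ∉ D → x ∉ B → g x = 0) →
        ∀ x, x ∈ D → x ∉ B → ∀ y, y ∈ D → y ∉ B →
          (sInf {r : ℝ | ∃ x' : X, ∃ y' ∈ B, ∃ z ∈ B, r = P x' y' / P x' z} /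
              (C₂ * sSup {r : ℝ | ∃ x' : X, ∃ y' ∈ B, ∃ z ∈ B, r = P x' y' / P x' z})) ^ 2 ≤
            f x * g y / (g x * f y) ∧
          f x * g y / (g x * f y) ≤
            (C₂ * sSup {r : ℝ | ∃ x' : X, ∃ y' ∈ B, ∃ z ∈ B, r = P x' y' / P x' z} /
              sInf {r : ℝ | ∃ x' : X, ∃ y' ∈ B, ∃ z ∈ B, r = P x' y' / P x' z}) ^ 2 := by
  intro B hB D f g hf0 hfne hfb hfh hfv hg0 hgne hgb hgh hgv x hxD hxB y hyD hyB
  obtain ⟨v, hv, hvV⟩ := hV_pos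
  have hVp : ∀ x, 0 < V x := fun x => lt_of_lt_of_le hv (hvV x)
  have hP1 : ∀ x y, P x y ≤ 1 := fun x y =>
    ((hP_sum x).le_tsum y (fun j _ => hP_nonneg x j)).trans (hP_sub x)
  have hmul : ∀ x z y, P x z * P z y ≤ Cstar * P x y := by
    intro x z y
    have hs : Summable (fun z => P x z * P z y) :=
      Summable.of_nonneg_of_le (fun z => mul_nonneg (hP_nonneg _ _) (hP_nonneg _ _))
        (fun z => mul_le_of_le_one_right (hP_nonneg _ _) (hP1 _ _)) (hP_sum x)
    exact (hs.le_tsum z (fun j _ => mul_nonneg (hP_nonneg _ _) (hP_nonneg _ _))).trans (hDSP x y)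
  set S := {r : ℝ | ∃ x' : X, ∃ y' ∈ B, ∃ z ∈ B, r = P x' y' / P x' z} with hS
  have hSpos : ∀ r ∈ S, 0 < r := by
    rintro r ⟨x', y', _, z, _, rfl⟩
    exact div_pos (hP_pos _ _) (hP_pos _ _)
  have hbdd : BddAbove S := by
    refine ⟨∑ a ∈ B, ∑ b ∈ B, Cstar / P a b, ?_⟩
    rintro r ⟨x', y', hy', z, hz, rfl⟩
    have hn : ∀ a b, 0 ≤ Cstar / P a b := fun a b => (div_pos hCstar (hP_pos _ _)).le
    have h1 : P x' y' / P x' z ≤ Cstar / P y' z := by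
      rw [div_le_div_iff₀ (hP_pos _ _) (hP_pos _ _)]
      exact hmul _ _ _
    refine h1.trans ?_
    refine (Finset.single_le_sum (f := fun b => Cstar / P y' b) (fun b _ => hn _ _) hz).trans ?_
    exact Finset.single_le_sum (f := fun a => ∑ b ∈ B, Cstar / P a b)
      (fun a _ => Finset.sum_nonneg fun b _ => hn _ _) hy'
  have hbelow : BddBelow S := ⟨0, fun r hr => (hSpos r hr).le⟩
  have hup : ∀ f : X → ℝ, (∀ x, 0 ≤ f x) → (∃ M : ℝ, ∀ x, f x ≤ M) →
      (∀ x, x ∈ D → x ∉ B → (1 / V x) * ∑' y, P x y * f y = f x) →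
      (∀ x, x ∉ D → x ∉ B → f x = 0) →
      ∀ x ∉ B, f x ≤ C₂ * ((1 / V x) * ∑ y ∈ B, P x y * f y) := by
    intro f h0 hb hh hv'
    refine hC₂ B hB f h0 hb ?_
    intro x hx
    by_cases hxD : x ∈ D
    · exact (hh x hxD hx).ge
    · rw [hv' x hxD hx]
      exact mul_nonneg (one_div_pos.2 (hVp x)).le
        (tsum_nonneg fun z => mul_nonneg (hP_nonneg _ _) (h0 _))
  have hpos : ∀ f : X → ℝ, (∀ x, 0 ≤ f x) → (∃ x, f x ≠ 0) →
      (∀ x ∉ B, f x ≤ C₂ * ((1 / V x) * ∑ y ∈ B, P x y * f y)) → 0 < ∑ z ∈ B, f z := by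
    intro f h0 hne hu
    refine lt_of_le_of_ne (Finset.sum_nonneg fun z _ => h0 z) ?_
    intro h
    have hz := (Finset.sum_eq_zero_iff_of_nonneg (fun z _ => h0 z)).1 h.symm
    obtain ⟨w, hw⟩ := hne
    apply hw
    by_cases hwB : w ∈ B
    · exact hz w hwB
    · have := hu w hwB
      rw [Finset.sum_eq_zero (fun y hy => by rw [hz y hy, mul_zero])] at this
      simp only [mul_zero] at this
      exact le_antisymm this (h0 w)
  have huf := hup f hf0 hfb hfh hfv
  have hug := hup g hg0 hgb hgh hgv
  have hF := hpos f hf0 hfne huf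
  have hG := hpos g hg0 hgne hug
  obtain ⟨z0, hz0⟩ : B.Nonempty := by
    rw [Finset.nonempty_iff_ne_empty]
    rintro rfl
    simp at hF
  have hne : S.Nonempty := ⟨_, z0, z0, hz0, z0, hz0, rfl⟩
  have hKle : ∀ r ∈ S, r ≤ sSup S := fun r hr => le_csSup hbdd hr
  have hkle : ∀ r ∈ S, sInf S ≤ r := fun r hr => csInf_le hbelow hr
  have hKpos : 0 < sSup S := by
    obtain ⟨r, hr⟩ := hne
    exact (hSpos r hr).trans_le (hKle r hr)
  have hkpos : 0 < sInf S := by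
    refine lt_of_lt_of_le (inv_pos.2 hKpos) (le_csInf hne ?_)
    rintro r ⟨x', y', hy', z, hz, rfl⟩
    have := hKle _ ⟨x', z, hz, y', hy', rfl⟩
    rw [← inv_div]
    exact inv_anti₀ (div_pos (hP_pos _ _) (hP_pos _ _)) this
  have hPu : ∀ x, ∀ z ∈ B, P x z ≤ sSup S * P x z0 := fun x z hz =>
    (div_le_iff₀ (hP_pos x z0)).1 (hKle _ ⟨x, z, hz, z0, hz0, rfl⟩)
  have hPl : ∀ x, ∀ z ∈ B, sInf S * P x z0 ≤ P x z := fun x z hz =>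
    (le_div_iff₀ (hP_pos x z0)).1 (hkle _ ⟨x, z, hz, z0, hz0, rfl⟩)
  have key_u : ∀ f : X → ℝ, (∀ x, 0 ≤ f x) →
      (∀ x ∉ B, f x ≤ C₂ * ((1 / V x) * ∑ y ∈ B, P x y * f y)) →
      ∀ x ∉ B, f x ≤ C₂ * sSup S * (1 / V x * P x z0 * ∑ z ∈ B, f z) := by
    intro f h0 hu x hx
    have h1 : ∑ y ∈ B, P x y * f y ≤ sSup S * P x z0 * ∑ z ∈ B, f z := by
      rw [Finset.mul_sum]
      exact Finset.sum_le_sum fun z hz => mul_le_mul_of_nonneg_right (hPu x z hz) (h0 z)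
    have h2 := mul_le_mul_of_nonneg_left
      (mul_le_mul_of_nonneg_left h1 (one_div_pos.2 (hVp x)).le) hC₂pos.le
    refine (hu x hx).trans (h2.trans (le_of_eq ?_))
    ring
  have key_l : ∀ f : X → ℝ, (∀ x, 0 ≤ f x) → (∃ M : ℝ, ∀ x, f x ≤ M) →
      (∀ x, x ∈ D → x ∉ B → (1 / V x) * ∑' y, P x y * f y = f x) →
      ∀ x, x ∈ D → x ∉ B → sInf S * (1 / V x * P x z0 * ∑ z ∈ B, f z) ≤ f x := by
    intro f h0 hb hh x hxD hx
    obtain ⟨M, hM⟩ := hb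
    have hs : Summable (fun y => P x y * f y) :=
      Summable.of_nonneg_of_le (fun z => mul_nonneg (hP_nonneg _ _) (h0 _))
        (fun z => mul_le_mul_of_nonneg_left (hM z) (hP_nonneg _ _)) ((hP_sum x).mul_right M)
    have h1 : sInf S * P x z0 * ∑ z ∈ B, f z ≤ ∑ y ∈ B, P x y * f y := by
      rw [Finset.mul_sum]
      exact Finset.sum_le_sum fun z hz => mul_le_mul_of_nonneg_right (hPl x z hz) (h0 z)
    have h2 : ∑ y ∈ B, P x y * f y ≤ ∑' y, P x y * f y :=
      hs.sum_le_tsum B (fun z _ => mul_nonneg (hP_nonneg _ _) (h0 _))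
    have h3 := mul_le_mul_of_nonneg_left (h1.trans h2) (one_div_pos.2 (hVp x)).le
    rw [hh x hxD hx] at h3
    refine le_trans (le_of_eq ?_) h3
    ring
  exact bhi_arith (sInf S) (C₂ * sSup S) (1 / V x * P x z0) (1 / V y * P y z0)
    (∑ z ∈ B, f z) (∑ z ∈ B, g z) (f x) (g y) (g x) (f y) hkpos (mul_pos hC₂pos hKpos)
    (mul_pos (one_div_pos.2 (hVp x)) (hP_pos _ _)) (mul_pos (one_div_pos.2 (hVp y)) (hP_pos _ _))
    hF hG
    (key_l f hf0 hfb hfh x hxD hxB) (key_u f hf0 huf x hxB)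
    (key_l g hg0 hgb hgh y hyD hyB) (key_u g hg0 hug y hyB)
    (key_l g hg0 hgb hgh x hxD hxB) (key_u g hg0 hug x hxB)
    (key_l f hf0 hfb hfh y hyD hyB) (key_u f hf0 huf y hyB)
end

section
/- Let G = (X,E) be a connected graph of finite geometry over a countably infinite vertex set X, with geodesic distance d. Let P be a sub-probability kernel on X with P(x,y) > 0 if and only if x ∼ y, and let V satisfy assumption (D) with base point x₀ and increasing profile W : ℕ₀ → (0,∞). Then for every r ∈ ℕ and every non-negative bounded function f which is (𝒰−I)-subharmonic in B_r(x₀)^c, one has f(x) ≤ ‖f‖_∞ ∏_{i=r}^{d(x,x₀)} 1/W(i) for all x with d(x,x₀) ≥ r. -/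
/-- (Theorem 2.8 of the paper.) Let `G = (X,E)` be a connected graph of finite
geometry over a countably infinite vertex set `X`, with geodesic distance `G.dist`. Let `P` be a
sub-probability kernel on `X` with `P x y > 0` iff `x ∼ y`, and let `V` satisfy assumption (D)
with base point `x₀` and increasing profile `W : ℕ → (0,∞)`. Then for every `r ∈ ℕ` and every
non-negative bounded function `f` which is `(𝒰 - I)`-subharmonic in `B_r(x₀)ᶜ`, one has
`f x ≤ ‖f‖_∞ ∏_{i=r}^{d(x,x₀)} 1/W i` for all `x` with `d(x,x₀) ≥ r`. -/
theorem stmt5 {X : Type*} [Countable X] [Infinite X]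
    (G : SimpleGraph X)
    (hfin : ∀ v : X, {y : X | G.Adj v y}.Finite)
    (hconn : G.Connected)
    (P : X → X → ℝ)
    (hP_nonneg : ∀ x y, 0 ≤ P x y)
    (hP_sum : ∀ x : X, Summable (P x))
    (hP_sub : ∀ x : X, ∑' y, P x y ≤ 1)
    (hP_adj : ∀ x y, 0 < P x y ↔ G.Adj x y)
    (x₀ : X) (W : ℕ → ℝ) (hW_pos : ∀ n, 0 < W n) (hW_mono : Monotone W)
    (V : X → ℝ) (hV : ∀ x, V x = W (G.dist x₀ x))
    (r : ℕ) (hr : 0 < r)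
    (f : X → ℝ) (hf_nonneg : ∀ x, 0 ≤ f x)
    (M : ℝ) (hfM : ∀ x, f x ≤ M)
    (hsub : ∀ x, r ≤ G.dist x₀ x → f x ≤ (1 / V x) * ∑' y, P x y * f y) :
    ∀ x, r ≤ G.dist x₀ x →
      f x ≤ M * ∏ i ∈ Finset.Icc r (G.dist x₀ x), (1 / W i) := by
  have hM : 0 ≤ M := le_trans (hf_nonneg x₀) (hfM x₀)
  have key : ∀ (n : ℕ) (C : ℝ), 0 ≤ C → r ≤ n + 1 → (∀ y, n ≤ G.dist x₀ y → f y ≤ C) →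
      ∀ x, n + 1 ≤ G.dist x₀ x → f x ≤ C * (1 / W (n + 1)) := by
    intro n C hC hrn hy x hx
    have h1 : ∀ y, P x y * f y ≤ P x y * C := by
      intro y
      rcases (hP_nonneg x y).eq_or_lt with h | h
      · simp [← h]
      · have hadj := (hP_adj x y).1 h
        have h2 : G.dist x₀ x ≤ G.dist x₀ y + G.dist y x := hconn.dist_triangle
        have h3 : G.dist y x = 1 := SimpleGraph.dist_eq_one_iff_adj.2 hadj.symm
        exact mul_le_mul_of_nonneg_left (hy y (by omega)) h.le
    have hs2 : Summable (fun y => P x y * C) := (hP_sum x).mul_right C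
    have hs1 : Summable (fun y => P x y * f y) :=
      Summable.of_nonneg_of_le (fun y => mul_nonneg (hP_nonneg x y) (hf_nonneg y)) h1 hs2
    have h4 : ∑' y, P x y * f y ≤ C := by
      calc ∑' y, P x y * f y ≤ ∑' y, P x y * C := hs1.tsum_le_tsum h1 hs2
        _ = (∑' y, P x y) * C := tsum_mul_right
        _ ≤ 1 * C := mul_le_mul_of_nonneg_right (hP_sub x) hC
        _ = C := one_mul C
    have h5 := hsub x (by omega)
    rw [hV x] at h5
    have h6 : 1 / W (G.dist x₀ x) ≤ 1 / W (n + 1) :=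
      one_div_le_one_div_of_le (hW_pos _) (hW_mono hx)
    have h7 : 0 ≤ 1 / W (G.dist x₀ x) := (one_div_pos.2 (hW_pos _)).le
    calc f x ≤ _ := h5
      _ ≤ 1 / W (G.dist x₀ x) * C := mul_le_mul_of_nonneg_left h4 h7
      _ ≤ 1 / W (n + 1) * C := mul_le_mul_of_nonneg_right h6 hC
      _ = _ := mul_comm _ _
  have main : ∀ n, r ≤ n → ∀ x, n ≤ G.dist x₀ x →
      f x ≤ M * ∏ i ∈ Finset.Icc r n, (1 / W i) := by
    intro n hn
    induction n, hn using Nat.le_induction with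
    | base =>
      intro x hx
      have := key (r - 1) M hM (by omega) (fun y _ => hfM y) x (by omega)
      rw [Nat.sub_add_cancel hr] at this
      simpa using this
    | succ n hn ih =>
      intro x hx
      rw [Finset.prod_Icc_succ_top (by omega), ← mul_assoc]
      exact key n _ (mul_nonneg hM (Finset.prod_nonneg fun i _ => (one_div_pos.2 (hW_pos i)).le))
        (by omega) ih x hx
  exact fun x hx => main _ hx x le_rfl
end

section
/- Let G = (X,E) be a connected graph of finite geometry with geodesic distance d, let P be a sub-probability kernel with P(x,y) > 0 iff x ∼ y and M := inf{ P(x,y) : x ∼ y } > 0, and let V satisfy assumption (D) with base point x₀ and increasing profile W. Then for every connected geodesically convex set D ⊆ X, every non-negative function f which is (𝒰−I)-superharmonic in D, every x ∈ D, and every x_r ∈ D lying on a geodesic path from x₀ to x with d(x_r,x₀) = r < d(x,x₀), one has f(x) ≥ f(x_r) ∏_{i=r+1}^{d(x,x₀)} M/W(i). -/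
theorem stmt6_aux {X : Type*} (G : SimpleGraph X) (hconn : G.Connected)
    (M : ℝ) (hM : 0 < M) (x₀ : X) (W : ℕ → ℝ) (hW_pos : ∀ n, 0 < W n)
    (D : Set X) (f : X → ℝ)
    (hstep : ∀ v ∈ D, ∀ u, G.Adj v u → f u * (M / W (G.dist x₀ v)) ≤ f v)
    {u x : X} (q : G.Walk u x) :
    (∀ w ∈ q.support, w ∈ D) → G.dist x₀ x = G.dist x₀ u + q.length →
    f u * ∏ i ∈ Finset.Icc (G.dist x₀ u + 1) (G.dist x₀ x), (M / W i) ≤ f x := by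
  induction q with
  | nil => intro _ _; simp
  | @cons u v x h q ih =>
    intro hD hd
    rw [SimpleGraph.Walk.length_cons] at hd
    have h1 : G.dist x₀ v ≤ G.dist x₀ u + G.dist u v := hconn.dist_triangle
    have h2 : G.dist x₀ x ≤ G.dist x₀ v + G.dist v x := hconn.dist_triangle
    have h3 : G.dist u v = 1 := SimpleGraph.dist_eq_one_iff_adj.2 h
    have h4 := SimpleGraph.dist_le q
    have hv : G.dist x₀ v = G.dist x₀ u + 1 := by omega
    have hD' : ∀ w ∈ q.support, w ∈ D := fun w hw => hD w (by simp [hw])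
    have key := ih hD' (by omega)
    have hs := hstep v (hD' v q.start_mem_support) u h.symm
    refine le_trans ?_ key
    rw [← Finset.mul_prod_Ioc_eq_prod_Icc (by omega : G.dist x₀ u + 1 ≤ G.dist x₀ x), ← mul_assoc,
      ← hv]
    have hI : Finset.Icc (G.dist x₀ v + 1) (G.dist x₀ x)
        = Finset.Ioc (G.dist x₀ v) (G.dist x₀ x) := by
      ext i; simp only [Finset.mem_Icc, Finset.mem_Ioc]; omega
    rw [hI]
    exact mul_le_mul_of_nonneg_right hs
      (Finset.prod_nonneg fun i _ => (div_pos hM (hW_pos i)).le)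

/-- (Theorem 2.9 of the paper.) Let `G = (X,E)` be a connected graph of finite
geometry with geodesic distance `G.dist`, let `P` be a sub-probability kernel with `P x y > 0`
iff `x ∼ y` and `M := inf { P x y : x ∼ y } > 0`, and let `V` satisfy assumption (D) with base
point `x₀` and increasing profile `W`. Then for every connected geodesically convex `D ⊆ X`,
every non-negative `f` which is `(𝒰 - I)`-superharmonic in `D`, every `x ∈ D`, and every
`x_r ∈ D` lying on a geodesic path from `x₀` to `x` with `d(x_r,x₀) = r < d(x,x₀)`, one has
`f x ≥ f x_r * ∏_{i=r+1}^{d(x,x₀)} M / W i`. -/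
theorem stmt6 {X : Type*} [Countable X] [Infinite X]
    (G : SimpleGraph X)
    (hfin : ∀ v : X, {y : X | G.Adj v y}.Finite)
    (hconn : G.Connected)
    (P : X → X → ℝ)
    (hP_nonneg : ∀ x y, 0 ≤ P x y)
    (hP_sum : ∀ x : X, Summable (P x))
    (hP_sub : ∀ x : X, ∑' y, P x y ≤ 1)
    (hP_adj : ∀ x y, 0 < P x y ↔ G.Adj x y)
    (M : ℝ) (hM : 0 < M) (hM_inf : ∀ x y, G.Adj x y → M ≤ P x y)
    (x₀ : X) (W : ℕ → ℝ) (hW_pos : ∀ n, 0 < W n) (hW_mono : Monotone W)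
    (V : X → ℝ) (hV : ∀ x, V x = W (G.dist x₀ x))
    (D : Set X)
    (hD_conn : ∀ u ∈ D, ∀ v ∈ D, ∃ p : G.Walk u v, ∀ w ∈ p.support, w ∈ D)
    (hD_conv : ∀ u ∈ D, ∀ v ∈ D, ∀ p : G.Walk u v,
      p.length = G.dist u v → ∀ w ∈ p.support, w ∈ D)
    (f : X → ℝ) (hf_nonneg : ∀ x, 0 ≤ f x)
    (hf_adm : ∀ x, Summable fun y => P x y * f y)
    (hsuper : ∀ x ∈ D, (1 / V x) * ∑' y, P x y * f y ≤ f x)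
    (x : X) (hx : x ∈ D) (x_r : X) (hx_r : x_r ∈ D) (r : ℕ)
    (p : G.Walk x₀ x) (hp_geo : p.length = G.dist x₀ x)
    (hx_r_mem : x_r ∈ p.support)
    (hx_r_dist : G.dist x₀ x_r = r) (hr_lt : r < G.dist x₀ x) :
    f x_r * ∏ i ∈ Finset.Icc (r + 1) (G.dist x₀ x), (M / W i) ≤ f x := by
  classical
  have hstep : ∀ v ∈ D, ∀ u, G.Adj v u → f u * (M / W (G.dist x₀ v)) ≤ f v := by
    intro v hv u hvu
    refine le_trans ?_ (hsuper v hv)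
    have h1 : P v u * f u ≤ ∑' y, P v y * f y :=
      (hf_adm v).le_tsum u fun y _ => mul_nonneg (hP_nonneg v y) (hf_nonneg y)
    have h2 : M * f u ≤ P v u * f u :=
      mul_le_mul_of_nonneg_right (hM_inf v u hvu) (hf_nonneg u)
    rw [hV]
    calc f u * (M / W (G.dist x₀ v)) = 1 / W (G.dist x₀ v) * (M * f u) := by ring
      _ ≤ _ := mul_le_mul_of_nonneg_left (h2.trans h1) (one_div_pos.2 (hW_pos _)).le
  have hlen : (p.takeUntil x_r hx_r_mem).length + (p.dropUntil x_r hx_r_mem).length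
      = p.length := by
    rw [← SimpleGraph.Walk.length_append, SimpleGraph.Walk.take_spec]
  have h1 := SimpleGraph.dist_le (p.takeUntil x_r hx_r_mem)
  have h2 := SimpleGraph.dist_le (p.dropUntil x_r hx_r_mem)
  have h3 : G.dist x₀ x ≤ G.dist x₀ x_r + G.dist x_r x := hconn.dist_triangle
  rw [← hx_r_dist]
  exact stmt6_aux G hconn M hM x₀ W hW_pos D f hstep (p.dropUntil x_r hx_r_mem)
    (hD_conv x_r hx_r x hx _ (by omega)) (by omega)
end

section
/- Let X be countably infinite, let b : X × X → [0,∞) be symmetric with b(x,x) = 0, ∑_{y} b(x,y) > 0 for every x, and b* := sup_x ∑_y b(x,y) < ∞; let m : X → (0,∞) and V : X → ℝ be bounded below. Set b(x) = ∑_y b(x,y), A = { x : m(x)V(x) + b(x) ≤ 0 }, P(x,y) = b(x,y)/b*, and Ṽ(x) = (m(x)V(x)+b(x))/b* for x ∈ A^c, Ṽ(x) = 0 for x ∈ A. Let H f(x) = (1/m(x)) ∑_y b(x,y)(f(x)−f(y)) + V(x)f(x) and let 𝒰 f(x) = (1/Ṽ(x)) ∑_y P(x,y)f(y). Then for every f with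 ∑_y b(x,y)|f(y)| < ∞ for all x, and every x ∈ A^c: H f(x) = −( V(x) + b(x)/m(x) ) (𝒰−I)f(x). In particular, for D ⊆ A^c, H f(x) ≥ 0 for all x ∈ D if and only if (𝒰−I)f(x) ≤ 0 for all x ∈ D. -/
/-- (Proposition 3.1 of the paper.) In the weighted-graph setting, with
`b* = sup_x ∑_y b x y`, `A = {x : m x * V x + b(x) ≤ 0}`, `P x y = b x y / b*`,
`Ṽ x = (m x * V x + b(x)) / b*` on `Aᶜ`, the graph Laplacian
`H f x = (1/m x) ∑_y b x y (f x - f y) + V x * f x` and the Feynman–Kac operator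
`𝒰 f x = (1/Ṽ x) ∑_y P x y * f y` satisfy, for admissible `f` and `x ∈ Aᶜ`,
`H f x = -(V x + b(x)/m x) * (𝒰 f x - f x)`; in particular, for `D ⊆ Aᶜ`,
`H f ≥ 0` on `D` iff `(𝒰 - I) f ≤ 0` on `D`. -/
theorem stmt8 {X : Type*} [Countable X] [Infinite X]
    (b : X → X → ℝ)
    (hb_nonneg : ∀ x y, 0 ≤ b x y)
    (hb_diag : ∀ x, b x x = 0)
    (hb_symm : ∀ x y, b x y = b y x)
    (hb_sum : ∀ x, Summable (b x))
    (hb_row_pos : ∀ x, 0 < ∑' y, b x y)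
    (bstar : ℝ)
    (hbstar : IsLUB (Set.range fun x => ∑' y, b x y) bstar)
    (m : X → ℝ) (hm : ∀ x, 0 < m x)
    (V : X → ℝ) (hV : BddBelow (Set.range V))
    (f : X → ℝ) (hf_adm : ∀ x, Summable fun y => b x y * |f y|) :
    (∀ x, 0 < m x * V x + ∑' y, b x y →
      (1 / m x) * (∑' y, b x y * (f x - f y)) + V x * f x =
        -(V x + (∑' y, b x y) / m x) *
          ((1 / ((m x * V x + ∑' y, b x y) / bstar)) *
              (∑' y, (b x y / bstar) * f y) - f x)) ∧
    (∀ D : Set X, (∀ x ∈ D, 0 < m x * V x + ∑' y, b x y) →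
      ((∀ x ∈ D, 0 ≤ (1 / m x) * (∑' y, b x y * (f x - f y)) + V x * f x) ↔
        (∀ x ∈ D,
          (1 / ((m x * V x + ∑' y, b x y) / bstar)) *
              (∑' y, (b x y / bstar) * f y) - f x ≤ 0))) := by
  have key : ∀ x, 0 < m x * V x + ∑' y, b x y →
      (1 / m x) * (∑' y, b x y * (f x - f y)) + V x * f x =
        -(V x + (∑' y, b x y) / m x) *
          ((1 / ((m x * V x + ∑' y, b x y) / bstar)) *
              (∑' y, (b x y / bstar) * f y) - f x) := by
    intro x hx
    have hbs : 0 < bstar := lt_of_lt_of_le (hb_row_pos x) (hbstar.1 ⟨x, rfl⟩)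
    have hs : Summable fun y => b x y * f y := by
      apply Summable.of_abs
      refine (hf_adm x).congr fun y => ?_
      rw [abs_mul, abs_of_nonneg (hb_nonneg x y)]
    have h1 : ∑' y, b x y * (f x - f y) = (∑' y, b x y) * f x - ∑' y, b x y * f y := by
      rw [← tsum_mul_right, ← ((hb_sum x).mul_right (f x)).tsum_sub hs]
      exact tsum_congr fun y => by ring
    have h2 : ∑' y, (b x y / bstar) * f y = (∑' y, b x y * f y) / bstar := by
      rw [← tsum_div_const]
      exact tsum_congr fun y => by ring
    rw [h1, h2]
    generalize (∑' y, b x y * f y) = S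
    generalize (∑' y, b x y) = B at hx ⊢
    have hm' := (hm x).ne'
    have hbs' := hbs.ne'
    have hx' := hx.ne'
    have h3 : V x + B / m x = (m x * V x + B) / m x := by field_simp
    rw [h3]
    generalize hW : m x * V x + B = W at hx hx' ⊢
    have hB : B = W - m x * V x := by rw [← hW]; ring
    rw [hB]
    field_simp
    ring
  refine ⟨key, fun D hD => forall₂_congr fun x hxD => ?_⟩
  have hx := hD x hxD
  rw [key x hx]
  have hpos : 0 < V x + (∑' y, b x y) / m x := by
    have : V x + (∑' y, b x y) / m x = (m x * V x + ∑' y, b x y) / m x := by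
      have := (hm x).ne'
      field_simp
    rw [this]
    exact div_pos hx (hm x)
  rw [neg_mul, ← mul_neg, mul_nonneg_iff_of_pos_left hpos, neg_nonneg]
end

section
/- Let (X,d) be a countably infinite metric space and let P be a sub-probability kernel on X such that P(x,y) ≍ J(d(x,y)) for all x,y ∈ X (i.e., there are constants c₁, c₂ > 0 with c₁ J(d(x,y)) ≤ P(x,y) ≤ c₂ J(d(x,y))), where J : [0,∞) → (0,∞) is non-increasing and satisfies the doubling condition J(r) ≤ C J(2r) for all r > 0 and some C > 0. Then P satisfies assumption (A): P(x,y) > 0 for all x,y and there is C_* > 0 with ∑_{z∈X} P(x,z)P(z,y) ≤ C_* P(x,y) for all x,y ∈ X. -/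
/-- (Proposition 5.1 of the paper.) Let `(X,d)` be a countably infinite metric
space and `P` a sub-probability kernel on `X` with `P x y ≍ J (dist x y)`, where
`J : [0,∞) → (0,∞)` is non-increasing and doubling (`J r ≤ CJ * J (2r)` for `r > 0`). Then `P`
satisfies assumption (A): `P x y > 0` everywhere and there is `Cstar > 0` with
`∑_z P x z * P z y ≤ Cstar * P x y` for all `x, y`. -/
theorem stmt12 {X : Type*} [MetricSpace X] [Countable X] [Infinite X]
    (P : X → X → ℝ)
    (hP_nonneg : ∀ x y, 0 ≤ P x y)
    (hP_sum : ∀ x : X, Summable (P x))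
    (hP_sub : ∀ x : X, ∑' y, P x y ≤ 1)
    (J : ℝ → ℝ)
    (hJ_pos : ∀ r, 0 ≤ r → 0 < J r)
    (hJ_anti : ∀ r s, 0 ≤ r → r ≤ s → J s ≤ J r)
    (CJ : ℝ) (hCJ : 0 < CJ)
    (hJ_doub : ∀ r : ℝ, 0 < r → J r ≤ CJ * J (2 * r))
    (c₁ c₂ : ℝ) (hc₁ : 0 < c₁) (hc₂ : 0 < c₂)
    (hPJ : ∀ x y, c₁ * J (dist x y) ≤ P x y ∧ P x y ≤ c₂ * J (dist x y)) :
    (∀ x y, 0 < P x y) ∧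
    ∃ Cstar > 0, ∀ x y, ∑' z, P x z * P z y ≤ Cstar * P x y := by
  have hpos : ∀ x y, 0 < P x y := fun x y =>
    lt_of_lt_of_le (mul_pos hc₁ (hJ_pos _ dist_nonneg)) (hPJ x y).1
  refine ⟨hpos, ?_⟩
  have hhalf : ∀ r, 0 ≤ r → J (r / 2) ≤ (CJ + 1) * J r := by
    intro r hr
    have h0 := hJ_pos r hr
    rcases hr.eq_or_lt with h | h
    · subst h
      rw [zero_div]
      nlinarith
    · have h1 := hJ_doub (r / 2) (by linarith)
      rw [show 2 * (r / 2) = r by ring] at h1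
      nlinarith
  obtain ⟨K, hK, hKpos⟩ : ∃ K, K = c₂ * (CJ + 1) / c₁ ∧ 0 < K := ⟨_, rfl, by positivity⟩
  obtain ⟨L, hL, hLpos⟩ : ∃ L, L = c₂ / c₁ ∧ 0 < L := ⟨_, rfl, by positivity⟩
  have hfar : ∀ x y u v, dist x y / 2 ≤ dist u v → P u v ≤ K * P x y := by
    intro x y u v h
    have hd : (0 : ℝ) ≤ dist x y := dist_nonneg
    calc P u v ≤ c₂ * J (dist u v) := (hPJ u v).2
      _ ≤ c₂ * J (dist x y / 2) := by
          gcongr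
          exact hJ_anti _ _ (by positivity) h
      _ ≤ c₂ * ((CJ + 1) * J (dist x y)) := by
          gcongr
          exact hhalf _ hd
      _ = K * (c₁ * J (dist x y)) := by
          rw [hK]
          field_simp
      _ ≤ K * P x y := by
          gcongr
          exact (hPJ x y).1
  have hsymm : ∀ z y, P z y ≤ L * P y z := by
    intro z y
    calc P z y ≤ c₂ * J (dist z y) := (hPJ z y).2
      _ = L * (c₁ * J (dist y z)) := by
          rw [hL, dist_comm]
          field_simp
      _ ≤ L * P y z := by
          gcongr
          exact (hPJ y z).1
  refine ⟨K * (1 + L), by positivity, fun x y => ?_⟩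
  have hxy := hpos x y
  have hterm : ∀ z, P x z * P z y ≤ K * P x y * (P x z + L * P y z) := by
    intro z
    have h1 := hpos x z
    have h2 := hpos z y
    have h3 := hpos y z
    have ht := dist_triangle x z y
    have hA : 0 < K * P x y := by positivity
    by_cases h : dist x y / 2 ≤ dist x z
    · calc P x z * P z y ≤ (K * P x y) * (L * P y z) :=
            mul_le_mul (hfar x y x z h) (hsymm z y) h2.le hA.le
        _ ≤ _ := by
            gcongr
            linarith
    · have h' : dist x y / 2 ≤ dist z y := by linarith
      calc P x z * P z y ≤ P x z * (K * P x y) := by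
            gcongr
            exact hfar x y z y h'
        _ = (K * P x y) * P x z := by ring
        _ ≤ _ := by
            gcongr
            have : 0 < L * P y z := by positivity
            linarith
  have hs : Summable (fun z => K * P x y * (P x z + L * P y z)) :=
    ((hP_sum x).add ((hP_sum y).mul_left L)).mul_left _
  have hs' : Summable (fun z => P x z * P z y) :=
    Summable.of_nonneg_of_le (fun z => mul_nonneg (hP_nonneg _ _) (hP_nonneg _ _)) hterm hs
  calc ∑' z, P x z * P z y ≤ ∑' z, K * P x y * (P x z + L * P y z) :=
        hs'.tsum_le_tsum hterm hs
    _ = K * P x y * (∑' z, P x z + L * ∑' z, P y z) := by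
        rw [tsum_mul_left, (hP_sum x).tsum_add ((hP_sum y).mul_left L), tsum_mul_left]
    _ ≤ K * P x y * (1 + L * 1) := by
        gcongr
        · exact hP_sub x
        · exact hP_sub y
    _ = K * (1 + L) * P x y := by ring
end

section
/- Let X be countably infinite, let Q be a probability kernel on X with n-step kernels Q_n (Q₁ = Q, Q_n(x,y) = ∑_z Q(x,z)Q_{n−1}(z,y)), and let a : ℕ → [0,1] be a probability mass function supported on {1,2,3,…} (the one-step distribution of an increasing random walk τ on ℕ₀ started at 0). Assume the DSP on ℕ: (a∗a)(n) ≤ C a(n) for all n ≥ 2, where (a∗a)(n) = ∑_{k=1}^{n−1} a(k)a(n−k). Then the subordinate kernel P(x,y) := ∑_{k=1}^{∞} Q_k(x,y) a(k) satisfies ∑_{z∈X} P(x,z)P(z,y) ≤ C P(x,y) for all x,y ∈ X, with the same constant C. -/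
/-- The `n`-step kernels of a Markov kernel `Q` on a countable space: `Q₁ = Q` and
`Q_n(x,y) = ∑_z Q(x,z) Q_{n-1}(z,y)`; by convention `Q₀` is the identity kernel. -/
noncomputable def kernelPow {X : Type*} [DecidableEq X] (Q : X → X → ℝ) : ℕ → X → X → ℝ
  | 0 => fun x y => if x = y then 1 else 0
  | 1 => Q
  | (n + 2) => fun x y => ∑' z, Q x z * kernelPow Q (n + 1) z y


open scoped ENNReal

/-- Extended nonnegative version of the step kernels. -/
noncomputable def kpowE {X : Type*} [DecidableEq X] (Q : X → X → ℝ≥0∞) : ℕ → X → X → ℝ≥0∞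
  | 0 => fun x y => if x = y then 1 else 0
  | (n + 1) => fun x y => ∑' z, Q x z * kpowE Q n z y

lemma kpowE_le_one {X : Type*} [DecidableEq X] (Q : X → X → ℝ≥0∞)
    (h : ∀ x, ∑' y, Q x y = 1) (n : ℕ) : ∀ x y, kpowE Q n x y ≤ 1 := by
  induction n with
  | zero => intro x y; simp only [kpowE]; split_ifs <;> simp
  | succ n ih =>
    intro x y
    simp only [kpowE]
    calc ∑' z, Q x z * kpowE Q n z y ≤ ∑' z, Q x z * 1 :=
          ENNReal.tsum_le_tsum fun z => mul_le_mul_right (ih z y) _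
      _ = 1 := by simp [h]

lemma kpowE_one {X : Type*} [DecidableEq X] (Q : X → X → ℝ≥0∞) : kpowE Q 1 = Q := by
  funext x y
  simp only [kpowE]
  rw [tsum_eq_single y]
  · simp
  · intro z hz; simp [hz]

lemma kpowE_add {X : Type*} [DecidableEq X] (Q : X → X → ℝ≥0∞) (m n : ℕ) :
    ∀ x y, kpowE Q (m + n) x y = ∑' z, kpowE Q m x z * kpowE Q n z y := by
  induction m with
  | zero =>
    intro x y
    rw [tsum_eq_single x]
    · simp [kpowE]
    · intro z hz; simp [kpowE, hz.symm]
  | succ m ih =>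
    intro x y
    rw [Nat.add_right_comm m 1 n]
    simp only [kpowE, ih, ← ENNReal.tsum_mul_left, ← ENNReal.tsum_mul_right]
    rw [ENNReal.tsum_comm]
    simp only [mul_assoc]

lemma kpowE_toReal {X : Type*} [DecidableEq X] (Q : X → X → ℝ)
    (h0 : ∀ x y, 0 ≤ Q x y)
    (h : ∀ x, ∑' y, ENNReal.ofReal (Q x y) = 1) (n : ℕ) :
    ∀ x y, (kpowE (fun x y => ENNReal.ofReal (Q x y)) n x y).toReal = kernelPow Q n x y := by
  induction n with
  | zero => intro x y; simp only [kpowE, kernelPow]; split_ifs <;> simp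
  | succ n ih =>
    intro x y
    cases n with
    | zero => simp [kpowE_one, kernelPow, h0]
    | succ n =>
      rw [kpowE, kernelPow, ENNReal.tsum_toReal_eq]
      · refine tsum_congr fun z => ?_
        rw [ENNReal.toReal_mul, ih, ENNReal.toReal_ofReal (h0 x z)]
      · intro z
        exact ENNReal.mul_ne_top ENNReal.ofReal_ne_top
          (ne_top_of_le_ne_top ENNReal.one_ne_top (kpowE_le_one _ h _ _ _))

/-- (Lemma 5.3 of the paper.) Let `X` be countably infinite, `Q` a probability
kernel on `X` with `n`-step kernels `Q_n`, and `a : ℕ → [0,1]` a probability mass function with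
`a 0 = 0` (the step distribution of an increasing random walk on `ℕ₀`). If the DSP on `ℕ` holds,
i.e. `(a∗a)(n) ≤ C * a n` for all `n ≥ 2` where `(a∗a)(n) = ∑_{k=1}^{n-1} a k * a (n-k)`,
then the subordinate kernel `P x y = ∑_{k ≥ 1} Q_k x y * a k` satisfies
`∑_z P x z * P z y ≤ C * P x y` for all `x, y`, with the same constant `C`. -/
theorem stmt14 {X : Type*} [Countable X] [Infinite X] [DecidableEq X]
    (Q : X → X → ℝ)
    (hQ_nonneg : ∀ x y, 0 ≤ Q x y)
    (hQ_sum : ∀ x : X, Summable (Q x))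
    (hQ_prob : ∀ x : X, ∑' y, Q x y = 1)
    (a : ℕ → ℝ)
    (ha_nonneg : ∀ n, 0 ≤ a n) (ha_le_one : ∀ n, a n ≤ 1)
    (ha_zero : a 0 = 0)
    (ha_sum : Summable a) (ha_total : ∑' n, a n = 1)
    (C : ℝ)
    (hDSP_a : ∀ n : ℕ, 2 ≤ n → ∑ k ∈ Finset.Ico 1 n, a k * a (n - k) ≤ C * a n)
    (P : X → X → ℝ)
    (hP : ∀ x y, P x y = ∑' k : ℕ, kernelPow Q k x y * a k) :
    ∀ x y, ∑' z, P x z * P z y ≤ C * P x y := by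
  have hq : ∀ x, ∑' y, ENNReal.ofReal (Q x y) = 1 := by
    intro x
    rw [← ENNReal.ofReal_tsum_of_nonneg (hQ_nonneg x) (hQ_sum x), hQ_prob, ENNReal.ofReal_one]
  have hα : ∑' n, ENNReal.ofReal (a n) = 1 := by
    rw [← ENNReal.ofReal_tsum_of_nonneg ha_nonneg ha_sum, ha_total, ENNReal.ofReal_one]
  have hC : 0 ≤ C := by
    by_contra hC
    push Not at hC
    have hz : ∀ n, a n = 0 := by
      intro n
      rcases Nat.eq_zero_or_pos n with h | h
      · rw [h, ha_zero]
      · have h1 := hDSP_a (n + n) (by omega)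
        have h2 : a n * a (n + n - n) ≤ ∑ k ∈ Finset.Ico 1 (n + n), a k * a (n + n - k) :=
          Finset.single_le_sum (f := fun k => a k * a (n + n - k))
            (fun k _ => mul_nonneg (ha_nonneg _) (ha_nonneg _))
            (Finset.mem_Ico.2 ⟨h, by omega⟩)
        rw [Nat.add_sub_cancel] at h2
        have h3 := ha_nonneg (n + n)
        nlinarith [ha_nonneg n]
    simp [hz] at ha_total
  have hconv : ∀ n, ∑ kl ∈ Finset.HasAntidiagonal.antidiagonal n, a kl.1 * a kl.2 ≤ C * a n := by
    intro n
    rw [Finset.Nat.sum_antidiagonal_eq_sum_range_succ (fun i j => a i * a j)]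
    rcases Nat.lt_or_ge n 2 with h | h
    · have := mul_nonneg hC (ha_nonneg n)
      interval_cases n <;> simpa [Finset.sum_range_succ, ha_zero] using this
    · rw [Finset.sum_range_succ, Finset.range_eq_Ico, Finset.sum_eq_sum_Ico_succ_bot (by omega)]
      simpa [ha_zero] using hDSP_a n h
  set K := kpowE (fun x y => ENNReal.ofReal (Q x y)) with hK
  set α : ℕ → ℝ≥0∞ := fun n => ENNReal.ofReal (a n) with hαdef
  have hK1 : ∀ n x y, K n x y ≤ 1 := fun n => kpowE_le_one _ hq n
  have hKr : ∀ n x y, (K n x y).toReal = kernelPow Q n x y :=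
    fun n => kpowE_toReal Q hQ_nonneg hq n
  set p : X → X → ℝ≥0∞ := fun x y => ∑' k, K k x y * α k with hp
  have hp1 : ∀ x y, p x y ≤ 1 := by
    intro x y
    calc p x y ≤ ∑' k, 1 * α k := ENNReal.tsum_le_tsum fun k => mul_le_mul_left (hK1 k x y) _
      _ = 1 := by simpa using hα
  have hpt : ∀ x y, p x y ≠ ⊤ := fun x y => ne_top_of_le_ne_top ENNReal.one_ne_top (hp1 x y)
  have hpP : ∀ x y, P x y = (p x y).toReal := by
    intro x y
    rw [hP, hp, ENNReal.tsum_toReal_eq]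
    · refine tsum_congr fun k => ?_
      rw [ENNReal.toReal_mul, hKr, ENNReal.toReal_ofReal (ha_nonneg k)]
    · intro k
      exact ENNReal.mul_ne_top (ne_top_of_le_ne_top ENNReal.one_ne_top (hK1 k x y))
        ENNReal.ofReal_ne_top
  intro x y
  have key : ∑' z, p x z * p z y ≤ ENNReal.ofReal C * p x y := by
    calc ∑' z, p x z * p z y
        = ∑' z, ∑' k, ∑' l, (K k x z * α k) * (K l z y * α l) := by
          simp only [hp, ENNReal.tsum_mul_left, ENNReal.tsum_mul_right]
      _ = ∑' k, ∑' l, ∑' z, (K k x z * α k) * (K l z y * α l) := by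
          rw [ENNReal.tsum_comm]
          exact tsum_congr fun k => ENNReal.tsum_comm
      _ = ∑' k, ∑' l, K (k + l) x y * (α k * α l) := by
          refine tsum_congr fun k => tsum_congr fun l => ?_
          rw [hK, kpowE_add, ← ENNReal.tsum_mul_right]
          exact tsum_congr fun z => mul_mul_mul_comm _ _ _ _
      _ = ∑' kl : ℕ × ℕ, K (kl.1 + kl.2) x y * (α kl.1 * α kl.2) :=
          (ENNReal.tsum_prod (f := fun k l => K (k + l) x y * (α k * α l))).symm
      _ = ∑' n, ∑ kl ∈ Finset.HasAntidiagonal.antidiagonal n, K (kl.1 + kl.2) x y * (α kl.1 * α kl.2) := by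
          rw [← Finset.HasAntidiagonal.sigmaAntidiagonalEquivProd.tsum_eq, ENNReal.tsum_sigma']
          refine tsum_congr fun n => ?_
          exact Finset.tsum_subtype (Finset.HasAntidiagonal.antidiagonal n)
            (fun kl : ℕ × ℕ => K (kl.1 + kl.2) x y * (α kl.1 * α kl.2))
      _ ≤ ∑' n, ENNReal.ofReal C * (K n x y * α n) := by
          refine ENNReal.tsum_le_tsum fun n => ?_
          have h1 : ∑ kl ∈ Finset.HasAntidiagonal.antidiagonal n, K (kl.1 + kl.2) x y * (α kl.1 * α kl.2)
              = K n x y * ENNReal.ofReal (∑ kl ∈ Finset.HasAntidiagonal.antidiagonal n, a kl.1 * a kl.2) := by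
            rw [ENNReal.ofReal_sum_of_nonneg
              (fun kl _ => mul_nonneg (ha_nonneg _) (ha_nonneg _)), Finset.mul_sum]
            refine Finset.sum_congr rfl fun kl hkl => ?_
            rw [Finset.HasAntidiagonal.mem_antidiagonal.1 hkl, ENNReal.ofReal_mul (ha_nonneg _)]
          rw [h1, mul_left_comm, hαdef, ← ENNReal.ofReal_mul hC]
          exact mul_le_mul_right (ENNReal.ofReal_le_ofReal (hconv n)) _
      _ = ENNReal.ofReal C * p x y := by rw [ENNReal.tsum_mul_left]
  have h2 := ENNReal.toReal_mono (ENNReal.mul_ne_top ENNReal.ofReal_ne_top (hpt x y)) key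
  rw [ENNReal.tsum_toReal_eq (fun z => ENNReal.mul_ne_top (hpt x z) (hpt z y)),
    ENNReal.toReal_mul, ENNReal.toReal_ofReal hC] at h2
  simpa only [hpP, ENNReal.toReal_mul] using h2
end

section
/- Let X be countably infinite, Q a probability kernel on X which is irreducible (for all x,y ∈ X there exists n ∈ ℕ with Q_n(x,y) > 0), and a : ℕ → [0,1] a probability mass function with a(0) = 0 such that (a∗a)(n) ≤ C a(n) for all n ≥ 2 and there exists n₀ ∈ ℕ with a(n) > 0 for all n ≥ n₀. Then the subordinate kernel P(x,y) = ∑_{k≥1} Q_k(x,y) a(k) satisfies assumption (A): P(x,y) > 0 for all x,y ∈ X and ∑_{z∈X} P(x,z)P(z,y) ≤ C P(x,y) for all x,y ∈ X. -/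
open scoped ENNReal

/-- The n-step kernel with values in `ℝ≥0∞`. -/
noncomputable def ekp {X : Type*} [DecidableEq X] (q : X → X → ℝ≥0∞) : ℕ → X → X → ℝ≥0∞
  | 0 => fun x y => if x = y then 1 else 0
  | (n + 1) => fun x y => ∑' z, q x z * ekp q n z y

theorem ekp_one {X : Type*} [DecidableEq X] (q : X → X → ℝ≥0∞) (x y : X) :
    ekp q 1 x y = q x y := by
  simp only [ekp]
  rw [tsum_eq_single y]
  · simp
  · intro z hz
    simp [hz]

theorem ekp_add {X : Type*} [DecidableEq X] (q : X → X → ℝ≥0∞) (m n : ℕ) (x y : X) :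
    ekp q (m + n) x y = ∑' z, ekp q m x z * ekp q n z y := by
  induction m generalizing x with
  | zero =>
    rw [tsum_eq_single x]
    · simp [ekp]
    · intro z hz
      simp [ekp, hz.symm]
  | succ m ih =>
    rw [show m + 1 + n = (m + n) + 1 by ring]
    simp only [ekp, ih, ← ENNReal.tsum_mul_left, ← ENNReal.tsum_mul_right]
    rw [ENNReal.tsum_comm]
    simp only [mul_assoc]

theorem ekp_sum {X : Type*} [DecidableEq X] (q : X → X → ℝ≥0∞)
    (hq : ∀ x, ∑' y, q x y = 1) (n : ℕ) (x : X) : ∑' y, ekp q n x y = 1 := by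
  induction n generalizing x with
  | zero => 
    rw [tsum_eq_single x]
    · simp [ekp]
    · intro z hz
      simp [ekp, hz.symm]
  | succ n ih =>
    simp only [ekp]
    rw [ENNReal.tsum_comm]
    simp only [ENNReal.tsum_mul_left, ih, mul_one, hq]

theorem ekp_le_one {X : Type*} [DecidableEq X] (q : X → X → ℝ≥0∞)
    (hq : ∀ x, ∑' y, q x y = 1) (n : ℕ) (x y : X) : ekp q n x y ≤ 1 :=
  (ENNReal.le_tsum y).trans (ekp_sum q hq n x).le

theorem kernelPow_eq {X : Type*} [DecidableEq X] (Q : X → X → ℝ) (q : X → X → ℝ≥0∞)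
    (hQ : ∀ x y, Q x y = (q x y).toReal)
    (hq : ∀ x, ∑' y, q x y = 1) (n : ℕ) (x y : X) :
    kernelPow Q n x y = (ekp q n x y).toReal := by
  have hfin : ∀ x y, q x y ≠ ⊤ := fun x y => by
    rw [← ekp_one q]
    exact ((ekp_le_one q hq 1 x y).trans_lt ENNReal.one_lt_top).ne
  induction n using Nat.strong_induction_on generalizing x with
  | _ n ih =>
    match n with
    | 0 => simp only [kernelPow, ekp]; split_ifs <;> simp
    | 1 => rw [ekp_one]; exact hQ x y
    | (n + 2) =>
      have : ekp q (n + 2) x y = ∑' z, q x z * ekp q (n + 1) z y := rfl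
      rw [this, ENNReal.tsum_toReal_eq]
      · simp only [kernelPow, ENNReal.toReal_mul]
        congr 1; ext z
        rw [ih (n + 1) (by omega) z, hQ]
      · intro z
        exact ENNReal.mul_ne_top (hfin x z)
          ((ekp_le_one q hq (n + 1) z y).trans_lt ENNReal.one_lt_top).ne

theorem tsum_antidiag (f : ℕ → ℕ → ℝ≥0∞) :
    ∑' j, ∑' k, f j k = ∑' n, ∑ p ∈ Finset.HasAntidiagonal.antidiagonal n, f p.1 p.2 := by
  rw [← ENNReal.tsum_prod, ← Finset.HasAntidiagonal.sigmaAntidiagonalEquivProd.tsum_eq, ENNReal.tsum_sigma']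
  congr 1; ext n
  rw [← Finset.tsum_subtype]
  rfl

theorem ekp_dsp {X : Type*} [DecidableEq X] (q : X → X → ℝ≥0∞) (A : ℕ → ℝ≥0∞) (c : ℝ≥0∞)
    (hA : ∀ n, ∑ p ∈ Finset.HasAntidiagonal.antidiagonal n, A p.1 * A p.2 ≤ c * A n) (x y : X) :
    ∑' z, (∑' k, ekp q k x z * A k) * (∑' k, ekp q k z y * A k)
      ≤ c * ∑' k, ekp q k x y * A k := by
  calc ∑' z, (∑' k, ekp q k x z * A k) * (∑' k, ekp q k z y * A k)
      = ∑' z, ∑' j, ∑' k, (ekp q j x z * A j) * (ekp q k z y * A k) := by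
        congr 1; ext z
        rw [← ENNReal.tsum_mul_right]
        congr 1; ext j
        rw [← ENNReal.tsum_mul_left]
    _ = ∑' j, ∑' k, ∑' z, (ekp q j x z * A j) * (ekp q k z y * A k) := by
        rw [ENNReal.tsum_comm]
        congr 1; ext j
        rw [ENNReal.tsum_comm]
    _ = ∑' j, ∑' k, ekp q (j + k) x y * (A j * A k) := by
        congr 1; ext j; congr 1; ext k
        rw [ekp_add, ← ENNReal.tsum_mul_right]
        congr 1; ext z; ring
    _ = ∑' n, ∑ p ∈ Finset.HasAntidiagonal.antidiagonal n, ekp q (p.1 + p.2) x y * (A p.1 * A p.2) :=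
        tsum_antidiag _
    _ ≤ ∑' n, c * (ekp q n x y * A n) := by
        refine ENNReal.tsum_le_tsum fun n => ?_
        calc _ = ekp q n x y * ∑ p ∈ Finset.HasAntidiagonal.antidiagonal n, A p.1 * A p.2 := by
              rw [Finset.mul_sum]
              refine Finset.sum_congr rfl fun p hp => ?_
              rw [Finset.HasAntidiagonal.mem_antidiagonal.1 hp]
          _ ≤ ekp q n x y * (c * A n) := by gcongr; exact hA n
          _ = _ := by ring
    _ = _ := ENNReal.tsum_mul_left

theorem ekp_add_ne {X : Type*} [DecidableEq X] (q : X → X → ℝ≥0∞) (m n : ℕ) (x z y : X)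
    (h1 : ekp q m x z ≠ 0) (h2 : ekp q n z y ≠ 0) : ekp q (m + n) x y ≠ 0 := by
  rw [ekp_add]
  intro h
  have := ENNReal.tsum_eq_zero.1 h z
  simp [h1, h2] at this

/-- (Corollary 5.4 of the paper.) Let `X` be countably infinite, `Q` an
irreducible probability kernel on `X`, and `a : ℕ → [0,1]` a probability mass function with
`a 0 = 0`, `(a∗a)(n) ≤ C * a n` for all `n ≥ 2`, and `a n > 0` for all `n ≥ n₀` for some
`n₀ ∈ ℕ`. Then the subordinate kernel `P x y = ∑_{k ≥ 1} Q_k x y * a k` satisfies assumption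
(A): `P x y > 0` for all `x, y` and `∑_z P x z * P z y ≤ C * P x y` for all `x, y`. -/
theorem stmt15 {X : Type*} [Countable X] [Infinite X] [DecidableEq X]
    (Q : X → X → ℝ)
    (hQ_nonneg : ∀ x y, 0 ≤ Q x y)
    (hQ_sum : ∀ x : X, Summable (Q x))
    (hQ_prob : ∀ x : X, ∑' y, Q x y = 1)
    (hQ_irr : ∀ x y : X, ∃ n : ℕ, 0 < n ∧ 0 < kernelPow Q n x y)
    (a : ℕ → ℝ)
    (ha_nonneg : ∀ n, 0 ≤ a n) (ha_le_one : ∀ n, a n ≤ 1)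
    (ha_zero : a 0 = 0)
    (ha_sum : Summable a) (ha_total : ∑' n, a n = 1)
    (C : ℝ)
    (hDSP_a : ∀ n : ℕ, 2 ≤ n → ∑ k ∈ Finset.Ico 1 n, a k * a (n - k) ≤ C * a n)
    (ha_pos : ∃ n₀ : ℕ, ∀ n, n₀ ≤ n → 0 < a n)
    (P : X → X → ℝ)
    (hP : ∀ x y, P x y = ∑' k : ℕ, kernelPow Q k x y * a k) :
    (∀ x y, 0 < P x y) ∧
    (∀ x y, ∑' z, P x z * P z y ≤ C * P x y) := by
  obtain ⟨n₀, hn₀⟩ := ha_pos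
  have hC : 0 ≤ C := by
    have h1 := hDSP_a (n₀ + 2) (by omega)
    have h2 : 0 ≤ ∑ k ∈ Finset.Ico 1 (n₀ + 2), a k * a (n₀ + 2 - k) :=
      Finset.sum_nonneg fun k _ => mul_nonneg (ha_nonneg _) (ha_nonneg _)
    exact nonneg_of_mul_nonneg_left (h2.trans h1) (hn₀ _ (by omega))
  set q : X → X → ℝ≥0∞ := fun x y => ENNReal.ofReal (Q x y) with hq_def
  set A : ℕ → ℝ≥0∞ := fun n => ENNReal.ofReal (a n) with hA_def
  have hQq : ∀ x y, Q x y = (q x y).toReal := fun x y =>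
    (ENNReal.toReal_ofReal (hQ_nonneg x y)).symm
  have haA : ∀ n, a n = (A n).toReal := fun n => (ENNReal.toReal_ofReal (ha_nonneg n)).symm
  have hq : ∀ x, ∑' y, q x y = 1 := fun x => by
    rw [← ENNReal.ofReal_tsum_of_nonneg (hQ_nonneg x) (hQ_sum x), hQ_prob, ENNReal.ofReal_one]
  have hAs : ∑' n, A n = 1 := by
    rw [← ENNReal.ofReal_tsum_of_nonneg ha_nonneg ha_sum, ha_total, ENNReal.ofReal_one]
  have hKfin : ∀ n x y, ekp q n x y ≠ ⊤ := fun n x y =>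
    ((ekp_le_one q hq n x y).trans_lt ENNReal.one_lt_top).ne
  set R : X → X → ℝ≥0∞ := fun x y => ∑' k, ekp q k x y * A k with hR
  have hRfin : ∀ x y, R x y ≠ ⊤ := fun x y => by
    refine ((?_ : R x y ≤ 1).trans_lt ENNReal.one_lt_top).ne
    rw [← hAs]
    exact ENNReal.tsum_le_tsum fun k => mul_le_of_le_one_left' (ekp_le_one q hq k x y)
  have hPR : ∀ x y, P x y = (R x y).toReal := fun x y => by
    rw [hP, hR]
    simp only
    rw [ENNReal.tsum_toReal_eq fun k => ENNReal.mul_ne_top (hKfin k x y) ENNReal.ofReal_ne_top]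
    congr 1; ext k
    rw [ENNReal.toReal_mul, kernelPow_eq Q q hQq hq, ← haA]
  have hirr : ∀ x y : X, ∃ n : ℕ, 0 < n ∧ ekp q n x y ≠ 0 := fun x y => by
    obtain ⟨n, hn, h⟩ := hQ_irr x y
    refine ⟨n, hn, fun h0 => ?_⟩
    rw [kernelPow_eq Q q hQq hq, h0] at h
    simp at h
  have hbig : ∀ (x y : X) (N : ℕ), ∃ n, N ≤ n ∧ ekp q n x y ≠ 0 := fun x y N => by
    induction N with
    | zero => obtain ⟨n, _, h⟩ := hirr x y; exact ⟨n, by omega, h⟩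
    | succ N ih =>
      obtain ⟨n, hn, h⟩ := ih
      obtain ⟨m, hm, h'⟩ := hirr x x
      exact ⟨m + n, by omega, ekp_add_ne q m n x x y h' h⟩
  have hA : ∀ n, ∑ p ∈ Finset.HasAntidiagonal.antidiagonal n, A p.1 * A p.2 ≤ ENNReal.ofReal C * A n := by
    intro n
    have hreal : ∑ p ∈ Finset.HasAntidiagonal.antidiagonal n, a p.1 * a p.2 ≤ C * a n := by
      rw [Finset.Nat.sum_antidiagonal_eq_sum_range_succ (fun i j => a i * a j)]
      by_cases h : 2 ≤ n
      · rw [Finset.sum_range_succ, Finset.range_eq_Ico, Finset.sum_eq_sum_Ico_succ_bot (by omega)]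
        simpa [ha_zero] using hDSP_a n h
      · have h3 : n = 0 ∨ n = 1 := by omega
        rcases h3 with rfl | rfl
        · simp [ha_zero]
        · simpa [Finset.sum_range_succ, ha_zero] using mul_nonneg hC (ha_nonneg 1)
    calc _ = ENNReal.ofReal (∑ p ∈ Finset.HasAntidiagonal.antidiagonal n, a p.1 * a p.2) := by
          rw [ENNReal.ofReal_sum_of_nonneg fun p _ => mul_nonneg (ha_nonneg _) (ha_nonneg _)]
          refine Finset.sum_congr rfl fun p _ => ?_
          rw [ENNReal.ofReal_mul (ha_nonneg _)]
      _ ≤ ENNReal.ofReal (C * a n) := ENNReal.ofReal_le_ofReal hreal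
      _ = _ := ENNReal.ofReal_mul hC
  refine ⟨fun x y => ?_, fun x y => ?_⟩
  · rw [hPR]
    refine ENNReal.toReal_pos (fun h0 => ?_) (hRfin x y)
    obtain ⟨n, hn, h⟩ := hbig x y n₀
    have h1 := ENNReal.tsum_eq_zero.1 h0 n
    have h2 : A n ≠ 0 := by simpa [hA_def] using hn₀ n hn
    exact mul_ne_zero h h2 h1
  · have key := ekp_dsp q A (ENNReal.ofReal C) hA x y
    have h1 : ∑' z, P x z * P z y = (∑' z, R x z * R z y).toReal := by
      rw [ENNReal.tsum_toReal_eq fun z => ENNReal.mul_ne_top (hRfin _ _) (hRfin _ _)]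
      congr 1; ext z
      rw [ENNReal.toReal_mul, hPR, hPR]
    rw [h1, hPR x y, ← ENNReal.toReal_ofReal hC, ← ENNReal.toReal_mul]
    exact ENNReal.toReal_mono (ENNReal.mul_ne_top ENNReal.ofReal_ne_top (hRfin x y))
      key
end

section
/- Fix α ∈ (0,1) and m ≥ 0, and set θ_m = (1+m^{1/α})^α − m and M = log(1+m^{1/α}). Define the probability mass function a_m on ℕ by a_m(k) = (α/(θ_m Γ(1−α))) · (Γ(k−α)/Γ(k+1)) · (1+m^{1/α})^{α−k} for k ≥ 1 and a_m(0) = 0 (the one-step distribution of the discrete (relativistic) α-stable subordinator). Then there exists a constant C = C(α,m) > 0 such that (a_m ∗ a_m)(n) ≤ C a_m(n) for all n ≥ 2, where (a_m ∗ a_m)(n) = ∑_{k=1}^{n−1} a_m(k) a_m(n−k). -/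
lemma b_conv (α : ℝ) (hα0 : 0 < α) (hα1 : α < 1) (b : ℕ → ℝ)
    (hpos : ∀ k, 1 ≤ k → 0 < b k)
    (hrec : ∀ k : ℕ, 1 ≤ k → ((k : ℝ) + 1) * b (k + 1) = ((k : ℝ) - α) * b k) :
    ∃ C > 0, ∀ n : ℕ, 2 ≤ n → ∑ k ∈ Finset.Ico 1 n, b k * b (n - k) ≤ C * b n := by
  have h1 : 0 < 1 - α := by linarith
  -- summability bound
  have hsum : ∀ n : ℕ, 1 ≤ n → α * ∑ k ∈ Finset.Ico 1 n, b k = b 1 - n * b n := by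
    intro n hn
    induction n, hn using Nat.le_induction with
    | base => simp
    | succ n hn ih =>
      rw [Finset.sum_Ico_succ_top hn, mul_add, ih]
      push_cast
      linarith [hrec n hn]
  have hsum' : ∀ n : ℕ, 1 ≤ n → ∑ k ∈ Finset.Ico 1 n, b k ≤ b 1 / α := by
    intro n hn
    rw [le_div_iff₀ hα0, mul_comm, hsum n hn]
    have := hpos n hn
    have : 0 ≤ (n : ℝ) * b n := by positivity
    linarith
  -- monotonicity
  have hmono : ∀ j : ℕ, 2 ≤ j → ∀ n : ℕ, j ≤ n →
      (j : ℝ) * (j - 1) * b j ≤ (n : ℝ) * (n - 1) * b n := by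
    intro j hj n hn
    induction n, hn using Nat.le_induction with
    | base => exact le_rfl
    | succ n hn ih =>
      refine ih.trans ?_
      have hr := hrec n (by omega)
      have hp := hpos n (by omega)
      have hn0 : (0 : ℝ) ≤ n := by positivity
      have e : ((n + 1 : ℕ) : ℝ) * (((n + 1 : ℕ) : ℝ) - 1) * b (n + 1)
          = n * (((n : ℝ) - α) * b n) := by
        rw [← hr]; push_cast; ring
      rw [e, mul_assoc]
      gcongr
  have hD : ∀ j n : ℕ, 1 ≤ j → j ≤ n → n ≤ 2 * j → 2 ≤ n → b j ≤ 8 / (1 - α) * b n := by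
    intro j n hj hjn hn2 hn
    have hbn := hpos n (by omega)
    have hbj := hpos j hj
    rw [div_mul_eq_mul_div, le_div_iff₀ h1]
    rcases Nat.lt_or_ge j 2 with h | h
    · obtain rfl : j = 1 := by omega
      obtain rfl : n = 2 := by omega
      have := hrec 1 le_rfl
      norm_num at this
      linarith
    · have hm := hmono j h n hjn
      have hj' : (2 : ℝ) ≤ j := by exact_mod_cast h
      have hn' : (n : ℝ) ≤ 2 * j := by exact_mod_cast hn2
      have hn0 : (2 : ℝ) ≤ n := by exact_mod_cast hn
      have h3 : (n : ℝ) * (n - 1) ≤ 8 * (j * (j - 1)) := by nlinarith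
      have h4 : (j : ℝ) * (j - 1) * b j ≤ (j : ℝ) * (j - 1) * (8 * b n) := by
        calc _ ≤ _ := hm
          _ ≤ 8 * (j * (j - 1)) * b n := by gcongr
          _ = _ := by ring
      have h5 : 0 < (j : ℝ) * (j - 1) := by nlinarith
      have h6 := le_of_mul_le_mul_left h4 h5
      nlinarith
  have hb1 := hpos 1 le_rfl
  refine ⟨8 / (1 - α) * (2 * (b 1 / α)), by positivity, fun n hn => ?_⟩
  have hbn := hpos n (by omega)
  calc ∑ k ∈ Finset.Ico 1 n, b k * b (n - k)
      ≤ ∑ k ∈ Finset.Ico 1 n, 8 / (1 - α) * b n * (b k + b (n - k)) := by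
        refine Finset.sum_le_sum fun k hk => ?_
        rw [Finset.mem_Ico] at hk
        have p1 := hpos k hk.1
        have p2 := hpos (n - k) (by omega)
        have p3 : 0 < 8 / (1 - α) * b n := by positivity
        rcases Nat.lt_or_ge (2 * k) n with h | h
        · have := hD (n - k) n (by omega) (by omega) (by omega) hn
          nlinarith
        · have := hD k n (by omega) (by omega) (by omega) hn
          nlinarith
    _ = 8 / (1 - α) * b n * (2 * ∑ k ∈ Finset.Ico 1 n, b k) := by
        rw [← Finset.mul_sum, Finset.sum_add_distrib,
          Finset.sum_Ico_reflect b 1 (by omega : n ≤ n + 1)]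
        simp only [Nat.add_sub_cancel_left, Nat.add_sub_cancel]
        ring
    _ ≤ 8 / (1 - α) * b n * (2 * (b 1 / α)) := by
        have := hsum' n (by omega)
        gcongr
    _ = _ := by ring


/-- (Proposition 5.6 of the paper.) Fix `α ∈ (0,1)` and `m ≥ 0`, and set
`θ_m = (1 + m^(1/α))^α - m` and `M = log (1 + m^(1/α))`. Let
`a_m k = (α/(θ_m Γ(1-α))) * (Γ(k-α)/Γ(k+1)) * (1 + m^(1/α))^(α-k)` for `k ≥ 1`, `a_m 0 = 0`
(the one-step distribution of the discrete (relativistic) `α`-stable subordinator). Then there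
is `C = C(α,m) > 0` such that `(a_m ∗ a_m)(n) ≤ C * a_m n` for all `n ≥ 2`. -/
theorem stmt18 (α m : ℝ) (hα0 : 0 < α) (hα1 : α < 1) (hm : 0 ≤ m)
    (a : ℕ → ℝ) (ha_zero : a 0 = 0)
    (ha : ∀ k : ℕ, 1 ≤ k →
      a k = (α / (((1 + m ^ (1 / α)) ^ α - m) * Real.Gamma (1 - α))) *
        (Real.Gamma ((k : ℝ) - α) / Real.Gamma ((k : ℝ) + 1)) *
        (1 + m ^ (1 / α)) ^ (α - (k : ℝ))) :
    ∃ C > 0, ∀ n : ℕ, 2 ≤ n → ∑ k ∈ Finset.Ico 1 n, a k * a (n - k) ≤ C * a n := by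
  have hm0 : 0 ≤ m ^ (1 / α) := Real.rpow_nonneg hm _
  set q : ℝ := 1 + m ^ (1 / α) with hq
  have hq0 : 0 < q := by linarith
  have hθ : 0 < q ^ α - m := by
    have e : (m ^ (1 / α)) ^ α = m := by
      rw [← Real.rpow_mul hm, one_div, inv_mul_cancel₀ hα0.ne', Real.rpow_one]
    have : (m ^ (1 / α)) ^ α < q ^ α := Real.rpow_lt_rpow hm0 (by linarith) hα0
    linarith
  have hG : 0 < Real.Gamma (1 - α) := Real.Gamma_pos_of_pos (by linarith)
  set c : ℝ := α / ((q ^ α - m) * Real.Gamma (1 - α)) with hc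
  have hc0 : 0 < c := by positivity
  set b : ℕ → ℝ := fun k => Real.Gamma ((k : ℝ) - α) / Real.Gamma ((k : ℝ) + 1) with hb
  obtain ⟨C, hC, h⟩ := b_conv α hα0 hα1 b
    (fun k hk => by
      have hk' : (1 : ℝ) ≤ k := by exact_mod_cast hk
      exact div_pos (Real.Gamma_pos_of_pos (by linarith)) (Real.Gamma_pos_of_pos (by linarith)))
    (fun k hk => by
      have hk' : (1 : ℝ) ≤ k := by exact_mod_cast hk
      have g1 : 0 < Real.Gamma ((k : ℝ) + 1) := Real.Gamma_pos_of_pos (by linarith)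
      simp only [hb]
      push_cast
      rw [Real.Gamma_add_one (s := (k : ℝ) + 1) (by positivity),
        show (k : ℝ) + 1 - α = (k - α) + 1 by ring,
        Real.Gamma_add_one (s := (k : ℝ) - α) (by linarith)]
      field_simp)
  refine ⟨c * q ^ α * C, by positivity, fun n hn => ?_⟩
  have e : ∑ k ∈ Finset.Ico 1 n, a k * a (n - k)
      = c ^ 2 * (q ^ α * q ^ (α - (n : ℝ))) * ∑ k ∈ Finset.Ico 1 n, b k * b (n - k) := by
    rw [Finset.mul_sum]
    refine Finset.sum_congr rfl fun k hk => ?_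
    rw [Finset.mem_Ico] at hk
    have e2 : q ^ α * q ^ (α - (n : ℝ)) = q ^ (α - (k : ℝ)) * q ^ (α - ((n - k : ℕ) : ℝ)) := by
      rw [← Real.rpow_add hq0, ← Real.rpow_add hq0, Nat.cast_sub hk.2.le]
      congr 1; ring
    rw [ha k hk.1, ha (n - k) (by omega), e2]
    simp only [hb]
    ring
  rw [e, ha n (by omega)]
  calc _ ≤ c ^ 2 * (q ^ α * q ^ (α - (n : ℝ))) * (C * b n) := by
        have := h n hn
        gcongr
    _ = _ := by simp only [hb]; ring
end

section
/- Fix α ∈ (0,1) and parameters β, γ > 1. Let X be countably infinite with an integer-valued metric d : X × X → ℕ₀, and let g : ℕ × X × X → [0,∞) satisfy the two-sided sub-Gaussian bounds: there are constants c₁,…,c₄ > 0 such that for all x,y ∈ X and all n ∈ ℕ with n ≥ d(x,y), g_n(x,y) ≤ (c₁/n^{γ/β}) exp( −c₂ (d(x,y)/n^{1/β})^{β/(β−1)} ) and g_n(x,y) + g_{n+1}(x,y) ≥ (c₃/n^{γ/β}) exp( −c₄ (d(x,y)/n^{1/β})^{β/(β−1)} ). Let a_0(k) = (α/Γ(1−α))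 Γ(k−α)/Γ(k+1), k ≥ 1, and define p(x,y) = ∑_{n = max(1, d(x,y))}^{∞} g_n(x,y) a_0(n). Then there exists a constant C ≥ 1 such that (1/C) (1+d(x,y))^{−(αβ+γ)} ≤ p(x,y) ≤ C (1+d(x,y))^{−(αβ+γ)} for all x,y ∈ X. -/
theorem aux_gamma_upper (α : ℝ) (h0 : 0 < α) (h1 : α < 1) (k : ℝ) (hk : 1 ≤ k) :
    Real.Gamma (k - α) / Real.Gamma (k + 1) ≤ (1 / (1 - α)) * k ^ (-(1 + α)) := by
  have hk0 : 0 < k := by linarith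
  have hG : 0 < Real.Gamma (k + 1) := Real.Gamma_pos_of_pos (by linarith)
  have hGk : 0 < Real.Gamma k := Real.Gamma_pos_of_pos hk0
  have h := Real.Gamma_mul_add_mul_le_rpow_Gamma_mul_rpow_Gamma (s := k) (t := k + 1)
    (a := α) (b := 1 - α) hk0 (by linarith) h0 (by linarith) (by ring)
  have e1 : α * k + (1 - α) * (k + 1) = (k - α) + 1 := by ring
  rw [e1, Real.Gamma_add_one (by linarith)] at h
  have e2 : Real.Gamma k ^ α * Real.Gamma (k + 1) ^ (1 - α) = Real.Gamma (k + 1) * k ^ (-α) := by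
    rw [Real.Gamma_add_one hk0.ne', Real.mul_rpow hk0.le hGk.le]
    rw [Real.rpow_sub hk0, Real.rpow_sub hGk, Real.rpow_neg hk0.le, Real.rpow_one, Real.rpow_one]
    have := (Real.rpow_pos_of_pos hGk α).ne'
    field_simp
  rw [e2] at h
  have hp : 0 < k ^ (-(1 + α)) := Real.rpow_pos_of_pos hk0 _
  have e3 : k ^ (-α) = k * k ^ (-(1 + α)) := by
    rw [show -α = 1 + (-(1 + α)) by ring, Real.rpow_add hk0, Real.rpow_one]
  rw [e3] at h
  have hGm : 0 < Real.Gamma (k - α) := Real.Gamma_pos_of_pos (by linarith)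
  rw [div_le_iff₀ hG, div_mul_eq_mul_div, one_mul, div_mul_eq_mul_div, le_div_iff₀ (by linarith)]
  have h2 : (1 - α) * k ≤ k - α := by nlinarith
  have h3 : (1 - α) * k * Real.Gamma (k - α) ≤ Real.Gamma (k + 1) * (k * k ^ (-(1 + α))) :=
    (mul_le_mul_of_nonneg_right h2 hGm.le).trans h
  have h4 : k * (Real.Gamma (k - α) * (1 - α)) ≤ k * (k ^ (-(1 + α)) * Real.Gamma (k + 1)) := by
    linarith
  exact le_of_mul_le_mul_left h4 hk0

theorem aux_gamma_lower (α : ℝ) (h0 : 0 < α) (h1 : α < 1) (k : ℝ) (hk : 1 ≤ k) :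
    (2 : ℝ) ^ (-α) * k ^ (-(1 + α)) ≤ Real.Gamma (k - α) / Real.Gamma (k + 1) := by
  have hk0 : 0 < k := by linarith
  have hG : 0 < Real.Gamma (k + 1) := Real.Gamma_pos_of_pos (by linarith)
  have hGm : 0 < Real.Gamma (k - α) := Real.Gamma_pos_of_pos (by linarith)
  have hGm1 : 0 < Real.Gamma (k + 1 - α) := Real.Gamma_pos_of_pos (by linarith)
  have hq : 0 < k + 1 - α := by linarith
  have h := Real.Gamma_mul_add_mul_le_rpow_Gamma_mul_rpow_Gamma (s := k + 1 - α)
    (t := (k + 1 - α) + 1)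
    (a := 1 - α) (b := α) hq (by linarith) (by linarith) h0 (by ring)
  have e1 : (1 - α) * (k + 1 - α) + α * ((k + 1 - α) + 1) = k + 1 := by ring
  rw [e1, Real.Gamma_add_one hq.ne'] at h
  have e2 : Real.Gamma (k + 1 - α) ^ (1 - α) * ((k + 1 - α) * Real.Gamma (k + 1 - α)) ^ α
      = (k + 1 - α) ^ α * Real.Gamma (k + 1 - α) := by
    rw [Real.mul_rpow hq.le hGm1.le, Real.rpow_sub hGm1, Real.rpow_one]
    have := (Real.rpow_pos_of_pos hGm1 α).ne'
    field_simp
  rw [e2] at h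
  have e3 : Real.Gamma (k + 1 - α) = (k - α) * Real.Gamma (k - α) := by
    rw [← Real.Gamma_add_one (by linarith)]; congr 1; ring
  rw [e3] at h
  have h2 : (k + 1 - α) ^ α ≤ (2 * k) ^ α :=
    Real.rpow_le_rpow hq.le (by linarith) h0.le
  have h3 : Real.Gamma (k + 1) ≤ (2 * k) ^ α * (k * Real.Gamma (k - α)) := by
    refine h.trans ?_
    have : (k - α) * Real.Gamma (k - α) ≤ k * Real.Gamma (k - α) :=
      mul_le_mul_of_nonneg_right (by linarith) hGm.le
    have h5 : 0 ≤ (k - α) * Real.Gamma (k - α) := mul_nonneg (by linarith) hGm.le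
    exact mul_le_mul h2 this h5 (by positivity)
  rw [le_div_iff₀ hG]
  refine (mul_le_mul_of_nonneg_left h3 (by positivity)).trans (le_of_eq ?_)
  rw [Real.mul_rpow (by norm_num) hk0.le, Real.rpow_neg (by norm_num), Real.rpow_neg hk0.le,
    Real.rpow_add hk0, Real.rpow_one]
  have h6 : (0:ℝ) < 2 ^ α := by positivity
  have h7 : (0:ℝ) < k ^ α := by positivity
  field_simp

theorem aux_exp (c q s : ℝ) (hc : 0 < c) (hq : 0 < q) (hs : 0 < s) :
    ∃ K : ℝ, 0 < K ∧ ∀ u : ℝ, 0 < u → Real.exp (-(c * u ^ q)) ≤ K * u ^ (-s) := by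
  have hm : 0 < s / q := by positivity
  refine ⟨(c / (s / q)) ^ (-(s / q)), by positivity, fun u hu => ?_⟩
  have h1 : c * u ^ q / (s / q) ≤ Real.exp (c * u ^ q / (s / q)) := by
    linarith [Real.add_one_le_exp (c * u ^ q / (s / q))]
  have h2 := Real.rpow_le_rpow (by positivity) h1 hm.le
  rw [← Real.exp_mul, div_mul_cancel₀ _ hm.ne', mul_div_right_comm,
    Real.mul_rpow (by positivity) (by positivity), ← Real.rpow_mul hu.le,
    mul_div_cancel₀ _ hq.ne'] at h2
  rw [Real.exp_neg, Real.rpow_neg (by positivity), Real.rpow_neg hu.le, ← mul_inv]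
  exact inv_anti₀ (by positivity) h2

theorem aux_step (s x : ℝ) (hs : 1 < s) (hx : 0 < x) :
    (s - 1) * (x + 1) ^ (-s) ≤ x ^ (1 - s) - (x + 1) ^ (1 - s) := by
  have hy : 0 < x + 1 := by linarith
  have h1 : 1 + (s - 1) / (x + 1) ≤ (x / (x + 1)) ^ (1 - s) := by
    rw [Real.rpow_def_of_pos (by positivity)]
    have h2 : Real.log (x / (x + 1)) ≤ -(1 / (x + 1)) := by
      refine (Real.log_le_sub_one_of_pos (by positivity)).trans (le_of_eq ?_)
      field_simp; ring
    have h3 : (s - 1) / (x + 1) ≤ Real.log (x / (x + 1)) * (1 - s) := by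
      have := mul_le_mul_of_nonneg_right h2 (by linarith : (0:ℝ) ≤ s - 1)
      have e : -(1 / (x + 1)) * (s - 1) = -((s - 1) / (x + 1)) := by ring
      rw [e] at this
      linarith
    linarith [Real.add_one_le_exp (Real.log (x / (x + 1)) * (1 - s))]
  rw [Real.div_rpow hx.le hy.le] at h1
  have hp : 0 < (x + 1) ^ (1 - s) := by positivity
  rw [le_div_iff₀ hp] at h1
  have e : (x + 1) ^ (1 - s) = (x + 1) * (x + 1) ^ (-s) := by
    rw [show (1 - s) = 1 + (-s) by ring, Real.rpow_add hy, Real.rpow_one]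
  have e2 : (1 + (s - 1) / (x + 1)) * (x + 1) ^ (1 - s)
      = (x + 1) ^ (1 - s) + (s - 1) * (x + 1) ^ (-s) := by
    rw [e]; field_simp
  linarith

theorem aux_sum (s R : ℝ) (hs : 1 < s) (hR : 0 < R) (m : ℕ) :
    ∑ i ∈ Finset.range m, ((i : ℝ) + 1 + R) ^ (-s) ≤ (1 / (s - 1)) * R ^ (1 - s) := by
  have key : (s - 1) * ∑ i ∈ Finset.range m, ((i : ℝ) + 1 + R) ^ (-s)
      ≤ R ^ (1 - s) - ((m : ℝ) + R) ^ (1 - s) := by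
    induction m with
    | zero => simp
    | succ m ih =>
      rw [Finset.sum_range_succ, mul_add]
      have := aux_step s (m + R) hs (by positivity)
      push_cast
      rw [show (m : ℝ) + R + 1 = m + 1 + R by ring] at this
      linarith
  have h2 : 0 ≤ ((m : ℝ) + R) ^ (1 - s) := by positivity
  rw [div_mul_eq_mul_div, one_mul, le_div_iff₀ (by linarith)]
  linarith

/-- Pointwise upper bound. -/
theorem aux_point (β c₂ s : ℝ) (hβ : 1 < β) (hc : 0 < c₂) (hs : 1 < s) :
    ∃ K : ℝ, 0 < K ∧ ∀ n D : ℕ, 1 ≤ n →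
      (n : ℝ) ^ (-s) * Real.exp (-(c₂ * (((D : ℝ) / (n : ℝ) ^ (1 / β)) ^ (β / (β - 1)))))
        ≤ K * ((n : ℝ) + 1 + (1 + (D : ℝ)) ^ β) ^ (-s) := by
  have hβ0 : 0 < β := by linarith
  obtain ⟨K, hK, hE⟩ := aux_exp c₂ (β / (β - 1)) (β * s) hc
    (div_pos hβ0 (by linarith)) (by positivity)
  refine ⟨(3 : ℝ) ^ s * (1 + K * 2 ^ (β * s)), by positivity, fun n D hn => ?_⟩
  have hn1 : (1 : ℝ) ≤ n := by exact_mod_cast hn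
  have hn0 : (0 : ℝ) < n := by linarith
  set R : ℝ := (1 + (D : ℝ)) ^ β with hRdef
  have hr : (1 : ℝ) ≤ 1 + (D : ℝ) := by linarith [Nat.cast_nonneg (α := ℝ) D]
  have hR : 1 ≤ R := Real.one_le_rpow hr hβ0.le
  -- scaling helper
  have scale : ∀ M : ℝ, 0 < M → (n : ℝ) + 1 + R ≤ 3 * M →
      M ^ (-s) ≤ 3 ^ s * ((n : ℝ) + 1 + R) ^ (-s) := by
    intro M hM hle
    have h1 : (3 * M) ^ (-s) ≤ ((n : ℝ) + 1 + R) ^ (-s) :=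
      Real.rpow_le_rpow_of_nonpos (by positivity) hle (by linarith)
    rw [Real.mul_rpow (by norm_num) hM.le, Real.rpow_neg (by norm_num)] at h1
    have h3 : (0:ℝ) < 3 ^ s := by positivity
    calc M ^ (-s) = 3 ^ s * ((3 ^ s)⁻¹ * M ^ (-s)) := by field_simp
      _ ≤ _ := mul_le_mul_of_nonneg_left h1 h3.le
  have hq : 0 ≤ 3 ^ s * ((n : ℝ) + 1 + R) ^ (-s) := by positivity
  have hKp : 0 < K * 2 ^ (β * s) := by positivity
  rcases le_or_gt R n with h | h
  · have h1 := scale n hn0 (by linarith)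
    have h2 : Real.exp (-(c₂ * (((D : ℝ) / (n : ℝ) ^ (1 / β)) ^ (β / (β - 1))))) ≤ 1 := by
      rw [Real.exp_le_one_iff]
      have : 0 ≤ c₂ * (((D : ℝ) / (n : ℝ) ^ (1 / β)) ^ (β / (β - 1))) := by positivity
      linarith
    have h3 : 0 ≤ (n : ℝ) ^ (-s) := by positivity
    nlinarith
  · have hD : 1 ≤ D := by
      by_contra hD
      have : D = 0 := by omega
      subst this
      simp [hRdef] at h
      omega
    have hD1 : (1 : ℝ) ≤ D := by exact_mod_cast hD
    have hD0 : (0 : ℝ) < D := by linarith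
    have h1 := scale R (by linarith) (by linarith)
    have h2 := hE ((D : ℝ) / (n : ℝ) ^ (1 / β)) (by positivity)
    have e : ((D : ℝ) / (n : ℝ) ^ (1 / β)) ^ (-(β * s)) = (D : ℝ) ^ (-(β * s)) * (n : ℝ) ^ s := by
      rw [Real.div_rpow hD0.le (by positivity), ← Real.rpow_mul hn0.le,
        show 1 / β * -(β * s) = -s by field_simp, Real.rpow_neg hn0.le, div_inv_eq_mul]
    have h3 : (D : ℝ) ^ (-(β * s)) ≤ 2 ^ (β * s) * R ^ (-s) := by
      have h4 : (2 * (D : ℝ)) ^ (-(β * s)) ≤ (1 + (D : ℝ)) ^ (-(β * s)) :=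
        Real.rpow_le_rpow_of_nonpos (by positivity) (by linarith) (by nlinarith)
      rw [Real.mul_rpow (by norm_num) hD0.le, Real.rpow_neg (by norm_num : (0:ℝ) ≤ 2)] at h4
      have e5 : R ^ (-s) = (1 + (D : ℝ)) ^ (-(β * s)) := by
        rw [hRdef, ← Real.rpow_mul (by linarith)]; congr 1; ring
      rw [e5]
      have h6 : (0:ℝ) < 2 ^ (β * s) := by positivity
      calc (D : ℝ) ^ (-(β * s)) = 2 ^ (β * s) * ((2 ^ (β * s))⁻¹ * (D : ℝ) ^ (-(β * s))) := by
            field_simp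
        _ ≤ _ := mul_le_mul_of_nonneg_left h4 h6.le
    rw [e] at h2
    have hnn : (n : ℝ) ^ (-s) * (n : ℝ) ^ s = 1 := by
      rw [← Real.rpow_add hn0]; simp
    calc _ ≤ (n : ℝ) ^ (-s) * (K * ((D : ℝ) ^ (-(β * s)) * (n : ℝ) ^ s)) :=
          mul_le_mul_of_nonneg_left h2 (by positivity)
      _ = K * (D : ℝ) ^ (-(β * s)) * ((n : ℝ) ^ (-s) * (n : ℝ) ^ s) := by ring
      _ = K * (D : ℝ) ^ (-(β * s)) := by rw [hnn, mul_one]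
      _ ≤ K * (2 ^ (β * s) * R ^ (-s)) := mul_le_mul_of_nonneg_left h3 hK.le
      _ = (K * 2 ^ (β * s)) * R ^ (-s) := by ring
      _ ≤ (K * 2 ^ (β * s)) * (3 ^ s * ((n : ℝ) + 1 + R) ^ (-s)) :=
          mul_le_mul_of_nonneg_left h1 hKp.le
      _ ≤ _ := by nlinarith


/-- (Proposition 5.7 a) of the paper.) Fix `α ∈ (0,1)` and `β, γ > 1`. Let `X`
be countably infinite with an integer-valued metric `d`, and let `g n x y` (vanishing for
`n < d x y`) satisfy the two-sided sub-Gaussian bounds with parameters `β, γ` for `n ≥ d x y`.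
Let `a₀ k = (α/Γ(1-α)) Γ(k-α)/Γ(k+1)` for `k ≥ 1`, and define
`p x y = ∑_{n ≥ max 1 (d x y)} g n x y * a₀ n`. Then there is `C ≥ 1` such that
`(1/C) (1 + d x y)^{-(αβ+γ)} ≤ p x y ≤ C (1 + d x y)^{-(αβ+γ)}` for all `x, y ∈ X`. -/
theorem stmt19 {X : Type*} [Countable X] [Infinite X]
    (α β γ : ℝ) (hα0 : 0 < α) (hα1 : α < 1) (hβ : 1 < β) (hγ : 1 < γ)
    (d : X → X → ℕ)
    (hd_self : ∀ x, d x x = 0)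
    (hd_eq : ∀ x y, d x y = 0 → x = y)
    (hd_symm : ∀ x y, d x y = d y x)
    (hd_tri : ∀ x y z, d x z ≤ d x y + d y z)
    (g : ℕ → X → X → ℝ)
    (hg_nonneg : ∀ n x y, 0 ≤ g n x y)
    (hg_zero : ∀ n x y, n < d x y → g n x y = 0)
    (c₁ c₂ c₃ c₄ : ℝ) (hc₁ : 0 < c₁) (hc₂ : 0 < c₂) (hc₃ : 0 < c₃) (hc₄ : 0 < c₄)
    (hg_upper : ∀ (n : ℕ) (x y : X), 1 ≤ n → d x y ≤ n →
      g n x y ≤ (c₁ / (n : ℝ) ^ (γ / β)) *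
        Real.exp (-(c₂ * (((d x y : ℝ) / (n : ℝ) ^ (1 / β)) ^ (β / (β - 1))))))
    (hg_lower : ∀ (n : ℕ) (x y : X), 1 ≤ n → d x y ≤ n →
      (c₃ / (n : ℝ) ^ (γ / β)) *
        Real.exp (-(c₄ * (((d x y : ℝ) / (n : ℝ) ^ (1 / β)) ^ (β / (β - 1))))) ≤
        g n x y + g (n + 1) x y)
    (a₀ : ℕ → ℝ) (ha₀_zero : a₀ 0 = 0)
    (ha₀ : ∀ k : ℕ, 1 ≤ k →
      a₀ k = (α / Real.Gamma (1 - α)) *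
        (Real.Gamma ((k : ℝ) - α) / Real.Gamma ((k : ℝ) + 1)))
    (p : X → X → ℝ)
    (hp : ∀ x y, p x y = ∑' n : ℕ, (if max 1 (d x y) ≤ n then g n x y * a₀ n else 0)) :
    ∃ C : ℝ, 1 ≤ C ∧ ∀ x y : X,
      (1 / C) * (1 + (d x y : ℝ)) ^ (-(α * β + γ)) ≤ p x y ∧
      p x y ≤ C * (1 + (d x y : ℝ)) ^ (-(α * β + γ)) := by

  have hβ0 : 0 < β := by linarith
  have hG1 : 0 < Real.Gamma (1 - α) := Real.Gamma_pos_of_pos (by linarith)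
  set s : ℝ := γ / β + (1 + α) with hsdef
  have hs : 1 < s := by have : 0 < γ / β := by positivity
                        linarith
  have hexp : β * (1 - s) = -(α * β + γ) := by rw [hsdef]; field_simp; ring
  -- bounds on a₀
  obtain ⟨A, hA, haU⟩ : ∃ A : ℝ, 0 < A ∧ ∀ k : ℕ, 1 ≤ k → a₀ k ≤ A * (k : ℝ) ^ (-(1 + α)) := by
    refine ⟨α / Real.Gamma (1 - α) * (1 / (1 - α)), ?_, fun k hk => ?_⟩
    · have : 0 < 1 - α := by linarith
      positivity
    · rw [ha₀ k hk, mul_assoc]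
      exact mul_le_mul_of_nonneg_left
        (aux_gamma_upper α hα0 hα1 k (by exact_mod_cast hk)) (by positivity)
  obtain ⟨B, hB, haL⟩ : ∃ B : ℝ, 0 < B ∧ ∀ k : ℕ, 1 ≤ k → B * (k : ℝ) ^ (-(1 + α)) ≤ a₀ k := by
    refine ⟨α / Real.Gamma (1 - α) * 2 ^ (-α), by positivity, fun k hk => ?_⟩
    rw [ha₀ k hk, mul_assoc]
    exact mul_le_mul_of_nonneg_left
        (aux_gamma_lower α hα0 hα1 k (by exact_mod_cast hk)) (by positivity)
  have ha_nonneg : ∀ k, 1 ≤ k → 0 ≤ a₀ k := fun k hk => le_trans (by positivity) (haL k hk)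
  obtain ⟨K, hK, hpt⟩ := aux_point β c₂ s hβ hc₂ hs
  -- upper bound and summability
  have hf0 : ∀ x y (n : ℕ), 0 ≤ (if max 1 (d x y) ≤ n then g n x y * a₀ n else 0) := by
    intro x y n
    split_ifs with h
    · exact mul_nonneg (hg_nonneg _ _ _) (ha_nonneg n ((le_max_left _ _).trans h))
    · exact le_rfl
  have hfU : ∀ x y (n : ℕ), (if max 1 (d x y) ≤ n then g n x y * a₀ n else 0) ≤
      c₁ * A * K * ((n : ℝ) + 1 + (1 + (d x y : ℝ)) ^ β) ^ (-s) := by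
    intro x y n
    split_ifs with h
    · have hn : 1 ≤ n := (le_max_left _ _).trans h
      have hn0 : (0 : ℝ) < n := by exact_mod_cast hn
      have h1 := hg_upper n x y hn ((le_max_right _ _).trans h)
      have h2 := haU n hn
      have h3 := hpt n (d x y) hn
      have e : (n : ℝ) ^ (-s) = ((n : ℝ) ^ (γ / β))⁻¹ * (n : ℝ) ^ (-(1 + α)) := by
        rw [← Real.rpow_neg hn0.le, ← Real.rpow_add hn0, hsdef]; congr 1; ring
      rw [e] at h3
      calc _ ≤ _ := mul_le_mul h1 h2 (ha_nonneg n hn) (by positivity)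
        _ = c₁ * A * (((n : ℝ) ^ (γ / β))⁻¹ * (n : ℝ) ^ (-(1 + α)) *
          Real.exp (-(c₂ * (((d x y : ℝ) / (n : ℝ) ^ (1 / β)) ^ (β / (β - 1)))))) := by
            rw [div_eq_mul_inv]; ring
        _ ≤ c₁ * A * _ := mul_le_mul_of_nonneg_left h3 (by positivity)
        _ = _ := by ring
    · positivity
  have hRpow : ∀ x y, ((1 + (d x y : ℝ)) ^ β) ^ (1 - s) = (1 + (d x y : ℝ)) ^ (-(α * β + γ)) := by
    intro x y
    rw [← Real.rpow_mul (by positivity), hexp]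
  have hpart : ∀ x y (m : ℕ), ∑ n ∈ Finset.range m,
      (if max 1 (d x y) ≤ n then g n x y * a₀ n else 0) ≤
      (c₁ * A * K * (1 / (s - 1))) * (1 + (d x y : ℝ)) ^ (-(α * β + γ)) := by
    intro x y m
    have h1 := aux_sum s ((1 + (d x y : ℝ)) ^ β) hs (by positivity) m
    rw [hRpow] at h1
    calc _ ≤ ∑ n ∈ Finset.range m, c₁ * A * K * ((n : ℝ) + 1 + (1 + (d x y : ℝ)) ^ β) ^ (-s) :=
          Finset.sum_le_sum (fun n _ => hfU x y n)
      _ = c₁ * A * K * ∑ n ∈ Finset.range m, ((n : ℝ) + 1 + (1 + (d x y : ℝ)) ^ β) ^ (-s) := by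
          rw [Finset.mul_sum]
      _ ≤ c₁ * A * K * _ := mul_le_mul_of_nonneg_left h1 (by positivity)
      _ = _ := by ring
  have hsummable : ∀ x y, Summable
      (fun n : ℕ => if max 1 (d x y) ≤ n then g n x y * a₀ n else 0) := fun x y =>
    summable_of_sum_range_le (hf0 x y) (hpart x y)
  have hUpper : ∀ x y, p x y ≤
      (c₁ * A * K * (1 / (s - 1))) * (1 + (d x y : ℝ)) ^ (-(α * β + γ)) := by
    intro x y
    rw [hp]
    exact Real.tsum_le_of_sum_range_le (hf0 x y) (hpart x y)
  -- lower bound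
  obtain ⟨L, hL, hLower⟩ : ∃ L : ℝ, 0 < L ∧ ∀ x y,
      L * (1 + (d x y : ℝ)) ^ (-(α * β + γ)) ≤ p x y := by
    refine ⟨(1 / 2) * (B * c₃ * Real.exp (-c₄) * 5 ^ (-s)), by positivity, fun x y => ?_⟩
    set f : ℕ → ℝ := fun n : ℕ => if max 1 (d x y) ≤ n then g n x y * a₀ n else 0 with hfdef
    have hr : (1 : ℝ) ≤ 1 + (d x y : ℝ) := by linarith [Nat.cast_nonneg (α := ℝ) (d x y)]
    set R : ℝ := (1 + (d x y : ℝ)) ^ β with hRdef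
    have hR1 : 1 ≤ R := Real.one_le_rpow hr hβ0.le
    have hR0 : 0 < R := by linarith
    have hrR : 1 + (d x y : ℝ) ≤ R := by
      have := Real.rpow_le_rpow_of_exponent_le hr hβ.le
      rwa [Real.rpow_one] at this
    set N : ℕ := ⌈R⌉₊ with hN
    have hNR : R ≤ N := Nat.le_ceil R
    have hNR2 : (N : ℝ) < R + 1 := Nat.ceil_lt_add_one hR0.le
    have hN1 : 1 + d x y ≤ N := by
      have : (1 : ℝ) + (d x y : ℝ) ≤ N := hrR.trans hNR
      exact_mod_cast this
    set m : ℝ := B * c₃ * Real.exp (-c₄) * (5 * R) ^ (-s) with hm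
    have hpair : ∀ n ∈ Finset.Ico N (2 * N), m ≤ f n + f (n + 1) := by
      intro n hn
      rw [Finset.mem_Ico] at hn
      obtain ⟨hn1, hn2⟩ := hn
      have hn3 : 1 ≤ n := by omega
      have hn0 : (0 : ℝ) < n := by exact_mod_cast hn3
      have hnN : (N : ℝ) ≤ n := by exact_mod_cast hn1
      have hn5 : (n : ℝ) + 1 ≤ 5 * R := by
        have : (n : ℝ) + 1 ≤ 2 * N := by exact_mod_cast hn2
        linarith
      have hfn : f n = g n x y * a₀ n := by
        rw [hfdef]; simp only; rw [if_pos (max_le hn3 (by omega))]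
      have hfn1 : f (n + 1) = g (n + 1) x y * a₀ (n + 1) := by
        rw [hfdef]; simp only; rw [if_pos (max_le (by omega) (by omega))]
      have hmono : ∀ k : ℕ, 1 ≤ k → (k : ℝ) ≤ 5 * R → B * (5 * R) ^ (-(1 + α)) ≤ a₀ k := by
        intro k hk hk5
        have hk0 : (0 : ℝ) < k := by exact_mod_cast hk
        exact le_trans (mul_le_mul_of_nonneg_left
          (Real.rpow_le_rpow_of_nonpos hk0 hk5 (by linarith)) hB.le) (haL k hk)
      have ha1 := hmono n hn3 (by linarith)
      have ha2 := hmono (n + 1) (by omega) (by push_cast; exact hn5)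
      have hlow := hg_lower n x y hn3 (by omega)
      have hdn : (d x y : ℝ) / (n : ℝ) ^ (1 / β) ≤ 1 := by
        rw [div_le_one (by positivity)]
        have h1 : R ^ (1 / β) ≤ (n : ℝ) ^ (1 / β) :=
          Real.rpow_le_rpow hR0.le (by linarith) (by positivity)
        have h2 : R ^ (1 / β) = 1 + (d x y : ℝ) := by
          rw [hRdef, ← Real.rpow_mul (by linarith), mul_one_div_cancel hβ0.ne', Real.rpow_one]
        linarith
      have hdn2 : ((d x y : ℝ) / (n : ℝ) ^ (1 / β)) ^ (β / (β - 1)) ≤ 1 :=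
        Real.rpow_le_one (by positivity) hdn (div_nonneg hβ0.le (by linarith))
      have hexp4 : Real.exp (-c₄) ≤
          Real.exp (-(c₄ * (((d x y : ℝ) / (n : ℝ) ^ (1 / β)) ^ (β / (β - 1))))) := by
        apply Real.exp_le_exp.mpr
        nlinarith
      have hpw : (5 * R) ^ (-(γ / β)) ≤ ((n : ℝ) ^ (γ / β))⁻¹ := by
        rw [← Real.rpow_neg hn0.le]
        exact Real.rpow_le_rpow_of_nonpos hn0 (by linarith)
          (by have : 0 < γ / β := by positivity
              linarith)
      have hglow : c₃ * (5 * R) ^ (-(γ / β)) * Real.exp (-c₄) ≤ g n x y + g (n + 1) x y := by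
        refine le_trans ?_ hlow
        rw [div_eq_mul_inv]
        exact mul_le_mul (mul_le_mul_of_nonneg_left hpw hc₃.le) hexp4 (by positivity)
          (by positivity)
      have hb0 : 0 ≤ B * (5 * R) ^ (-(1 + α)) := by positivity
      calc m = (c₃ * (5 * R) ^ (-(γ / β)) * Real.exp (-c₄)) * (B * (5 * R) ^ (-(1 + α))) := by
            rw [hm, hsdef, show -(γ / β + (1 + α)) = -(γ / β) + -(1 + α) by ring,
              Real.rpow_add (by positivity)]
            ring
        _ ≤ (g n x y + g (n + 1) x y) * (B * (5 * R) ^ (-(1 + α))) :=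
            mul_le_mul_of_nonneg_right hglow hb0
        _ = g n x y * (B * (5 * R) ^ (-(1 + α))) + g (n + 1) x y * (B * (5 * R) ^ (-(1 + α))) := by
            ring
        _ ≤ f n + f (n + 1) := by
            rw [hfn, hfn1]
            exact add_le_add (mul_le_mul_of_nonneg_left ha1 (hg_nonneg _ _ _))
              (mul_le_mul_of_nonneg_left ha2 (hg_nonneg _ _ _))
    have hS1 : ∑ n ∈ Finset.Ico N (2 * N), f n ≤ p x y := by
      rw [hp]
      exact (hsummable x y).sum_le_tsum _ (fun i _ => hf0 x y i)
    have hS2 : ∑ n ∈ Finset.Ico N (2 * N), f (n + 1) ≤ p x y := by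
      rw [hp, Finset.sum_Ico_add']
      exact (hsummable x y).sum_le_tsum _ (fun i _ => hf0 x y i)
    have hS3 : (N : ℝ) * m ≤ ∑ n ∈ Finset.Ico N (2 * N), (f n + f (n + 1)) := by
      have := Finset.card_nsmul_le_sum _ _ m hpair
      rw [Nat.card_Ico, nsmul_eq_mul, show 2 * N - N = N by omega] at this
      exact this
    rw [Finset.sum_add_distrib] at hS3
    have hm0 : 0 ≤ m := by positivity
    have hS4 : R * m ≤ N * m := mul_le_mul_of_nonneg_right hNR hm0
    have hfin : R * m = (B * c₃ * Real.exp (-c₄) * 5 ^ (-s)) *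
        (1 + (d x y : ℝ)) ^ (-(α * β + γ)) := by
      rw [← hRpow, ← hRdef, hm, Real.mul_rpow (by norm_num) hR0.le,
        show (1 - s) = 1 + -s by ring, Real.rpow_add hR0, Real.rpow_one]
      ring
    linarith
  refine ⟨max 1 (max (c₁ * A * K * (1 / (s - 1))) (1 / L)), le_max_left _ _, fun x y => ⟨?_, ?_⟩⟩
  · refine le_trans (mul_le_mul_of_nonneg_right ?_ (by positivity)) (hLower x y)
    rw [one_div_le (lt_of_lt_of_le one_pos (le_max_left _ _)) hL]
    exact (le_max_right _ _).trans (le_max_right _ _)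
  · refine (hUpper x y).trans (mul_le_mul_of_nonneg_right ?_ (by positivity))
    exact (le_max_left _ _).trans (le_max_right _ _)
end
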